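/- Let n = 2m ≥ 2. For every monomial x^a ∈ H(n), the map H_Φ(x^a) : H(n) → H(n) is an inner derivation of H(n), where the p-power (x^a)^{[p]} used in H is x^a itself if x^a = x_i x_{i'} for some 1 ≤ i ≤ m, and 0 for all other monomials. (Hence Φ lies in the kernel of the Hochschild map H and defines a restricted cohomology class of H(n).) -/

import Mathlib

/-!
The proof shows that `H_Φ(x^a)` is identically zero, so it is `ad 0`.

The Poisson bracket and `Φ` are the coefficients of `s` and `s³` of the Moyal star product on
`A(2m)[s]`. Let `X_i = x_i + s σ(i) D_{i'}`; these operators satisfy the Heisenberg relations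
`[X_i, X_{i'}] = 2 s σ(i)` and `X_i ^ p = 0`. Left star multiplication by `x^a` is the
Weyl-ordered monomial `Z` in the `X_i`; as a polynomial in `s` with coefficients in `End A(2m)` it
has coefficient `{x^a, ·}` at `s` (`weyl_coeff_one`) and `Φ(x^a, ·)` at `s³` (`weyl_coeff_three`).

Let `Z⁻` be the image of `Z` under `s ↦ -s`; this is right star multiplication, so it commutes with
`Z` (`IsWeyl.commute_flip`). Hence `(Z - Z⁻)^p = Z^p - (Z⁻)^p` in characteristic `p`. Since
`Z - Z⁻ = 2 (s {x^a, ·} + s³ Φ(x^a, ·) + ⋯)`, the coefficient of `s^{p+2}` on the left is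
`2^p ∑_j (ad x^a)^j Φ(x^a, (ad x^a)^{p-1-j} ·)`, where `ad` is the Poisson bracket. It
vanishes as soon as `s^{2(p-1)}` divides `Z^p`, because `p + 2 < 2(p - 1)` for `p ≥ 5`
(`hochschild_coeff`).

The divisibility is proved one pair `(i, i')` at a time (`mode_pow`). For `Y P - P Y = c` central and
`Y^p = P^p = 0`, the element `N = Y P` satisfies `N^p = c^{p-1} N` (`number_pow`). A Weyl-ordered
monomial in `Y` and `P` is a homogeneous polynomial in `N` and `c`, multiplied by a power of `Y` or
of `P`. If the two exponents differ, this power is nontrivial and the `p`-th power of the monomial is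
zero; if both exponents are `a`, the `p`-th power is divisible by `c^{(p-1)a}`. Thus `Z^p = 0`
unless `a_i = a_{i'}` for all `i`, and then `s^{(p-1)|a|/2}` divides `Z^p`, where `|a|/2 ≥ 2` as soon
as `|a| ≥ 3`.

Two points remain. If `|a| ≤ 2` then `Φ(x^a, ·) = 0`; the same fact gives `Φ((x^a)^{[p]}, ·) = 0`.
And the bracket of `H(n)` drops constant terms: this affects neither the Poisson bracket nor `Φ` on
the next step, and the only term of the sum to which no bracket is applied at the end, that for
`j = 0`, has no constant term, because `p - 1 ≥ 4` brackets with `x^a`, `|a| ≥ 3`, raise the degree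
to at least `4` (`HOp_eq_zero`).
-/

set_option maxHeartbeats 1000000
set_option synthInstance.maxHeartbeats 400000

open scoped BigOperators
noncomputable section

variable (F : Type*) [Field F] (p n : ℕ)

/-- The ideal `(X_1^p, …, X_n^p)` of the polynomial ring. -/
def truncIdeal : Ideal (MvPolynomial (Fin n) F) :=
  Ideal.span (Set.range fun i : Fin n => MvPolynomial.X i ^ p)

/-- The truncated polynomial algebra `A(n) = F[x_1,…,x_n]/(x_1^p,…,x_n^p)`. -/
abbrev TruncP := MvPolynomial (Fin n) F ⧸ truncIdeal F p n

/-- The monomial `x^a` in `A(n)`. -/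
def xpow (a : Fin n → ℕ) : TruncP F p n :=
  Ideal.Quotient.mk _ (MvPolynomial.monomial (Finsupp.equivFunOnFinite.symm a) 1)

/-- Lift an `F`-linear map killing the truncation ideal to the quotient. -/
def liftF {N : Type*} [AddCommGroup N] [Module F N]
    (f : MvPolynomial (Fin n) F →ₗ[F] N)
    (h : (truncIdeal F p n).restrictScalars F ≤ LinearMap.ker f) :
    TruncP F p n →ₗ[F] N :=
  (Submodule.liftQ ((truncIdeal F p n).restrictScalars F) f h) ∘ₗ
    (Submodule.Quotient.restrictScalarsEquiv F (truncIdeal F p n)).symm.toLinearMap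

lemma liftF_mk {N : Type*} [AddCommGroup N] [Module F N]
    (f : MvPolynomial (Fin n) F →ₗ[F] N)
    (h : (truncIdeal F p n).restrictScalars F ≤ LinearMap.ker f)
    (x : MvPolynomial (Fin n) F) :
    liftF F p n f h (Ideal.Quotient.mk _ x) = f x := by
  simp only [liftF, LinearMap.coe_comp, Function.comp_apply, LinearEquiv.coe_coe]
  have : (Ideal.Quotient.mk (truncIdeal F p n)) x = Submodule.Quotient.mk x := rfl
  rw [this, Submodule.Quotient.restrictScalarsEquiv_symm_mk, Submodule.liftQ_apply]

lemma truncIdeal_pderiv_mem [CharP F p] (j : Fin n) {f : MvPolynomial (Fin n) F}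
    (hf : f ∈ truncIdeal F p n) :
    Ideal.Quotient.mk (truncIdeal F p n) (MvPolynomial.pderiv j f) = 0 := by
  classical
  let K : Ideal (MvPolynomial (Fin n) F) :=
    { carrier := {g | Ideal.Quotient.mk (truncIdeal F p n) (MvPolynomial.pderiv j g) = 0 ∧
        Ideal.Quotient.mk (truncIdeal F p n) g = 0},
      add_mem' := by
        rintro a b ⟨ha1, ha2⟩ ⟨hb1, hb2⟩
        refine ⟨?_, ?_⟩
        · rw [map_add, map_add, ha1, hb1, add_zero]
        · rw [map_add, ha2, hb2, add_zero]
      zero_mem' := ⟨by rw [map_zero, map_zero], by rw [map_zero]⟩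
      smul_mem' := by
        rintro c x ⟨hx1, hx2⟩
        refine ⟨?_, ?_⟩
        · have hL : MvPolynomial.pderiv j (c * x)
              = c * MvPolynomial.pderiv j x + x * MvPolynomial.pderiv j c := by
            have := (MvPolynomial.pderiv j).leibniz c x
            simpa [smul_eq_mul, mul_comm] using this
          rw [smul_eq_mul, hL]
          rw [map_add, map_mul, map_mul, hx1, hx2, mul_zero, zero_mul, add_zero]
        · rw [smul_eq_mul, map_mul, hx2, mul_zero] }
  have hle : truncIdeal F p n ≤ K := by
    rw [truncIdeal, Ideal.span_le]
    rintro _ ⟨i, rfl⟩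
    refine ⟨?_, ?_⟩
    · have hgen : MvPolynomial.pderiv j (MvPolynomial.X (R := F) i ^ p) = 0 := by
        rw [MvPolynomial.X_pow_eq_monomial, MvPolynomial.pderiv_monomial]
        rcases eq_or_ne i j with h | h
        · subst h
          simp [Finsupp.single_apply, CharP.cast_eq_zero F p]
        · simp [Finsupp.single_apply, h]
      rw [hgen, map_zero]
    · exact Ideal.Quotient.eq_zero_iff_mem.mpr (Ideal.subset_span ⟨i, rfl⟩)
  exact (hle hf).1

lemma truncIdeal_support {f : MvPolynomial (Fin n) F} (hf : f ∈ truncIdeal F p n) :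
    ∀ d ∈ f.support, ∃ i, p ≤ d i := by
  classical
  let K : Ideal (MvPolynomial (Fin n) F) :=
    { carrier := {g | ∀ d ∈ g.support, ∃ i, p ≤ d i},
      add_mem' := by
        intro a b ha hb d hd
        rcases Finset.mem_union.mp (MvPolynomial.support_add hd) with h | h
        · exact ha d h
        · exact hb d h
      zero_mem' := by simp
      smul_mem' := by
        intro c x hx d hd
        rw [smul_eq_mul] at hd
        obtain ⟨d1, hd1, d2, hd2, rfl⟩ := Finset.mem_add.mp (MvPolynomial.support_mul c x hd)
        obtain ⟨i, hi⟩ := hx d2 hd2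
        exact ⟨i, le_trans hi (by simp)⟩ }
  have hle : truncIdeal F p n ≤ K := by
    rw [truncIdeal, Ideal.span_le]
    rintro _ ⟨i, rfl⟩ d hd
    simp only [MvPolynomial.X_pow_eq_monomial] at hd
    rw [MvPolynomial.support_monomial] at hd
    simp only [one_ne_zero, if_false] at hd
    rcases Finset.mem_singleton.mp hd with rfl
    exact ⟨i, by simp⟩
  exact hle hf

/-- The coefficient of `x^a` (for `a` componentwise `< p`) of an element of `A(n)`,
as a linear functional. For `a` not in the box this is defined to be `0`. -/
def coeffT (a : Fin n → ℕ) : TruncP F p n →ₗ[F] F :=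
  if h : ∀ i, a i < p then
    liftF F p n
      { toFun := fun f => f.coeff (Finsupp.equivFunOnFinite.symm a),
        map_add' := fun f g => MvPolynomial.coeff_add _ f g,
        map_smul' := fun c f => MvPolynomial.coeff_smul _ c f }
      (by
        intro f hf
        have hf' : f ∈ truncIdeal F p n := hf
        simp only [LinearMap.mem_ker, LinearMap.coe_mk, AddHom.coe_mk]
        by_contra hne
        have hmem : Finsupp.equivFunOnFinite.symm a ∈ f.support :=
          MvPolynomial.mem_support_iff.mpr hne
        obtain ⟨i, hi⟩ := truncIdeal_support F p n hf' _ hmem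
        have heq : (Finsupp.equivFunOnFinite.symm a) i = a i := rfl
        have h2 := h i
        rw [heq] at hi
        omega)
  else 0

/-- The Jacobson–Witt algebra `W(n) = Der_F A(n)`. -/
abbrev Witt := Derivation F (TruncP F p n) (TruncP F p n)

def DjL [CharP F p] (j : Fin n) : TruncP F p n →ₗ[F] TruncP F p n :=
  liftF F p n
    ((Ideal.Quotient.mkₐ F (truncIdeal F p n)).toLinearMap ∘ₗ (MvPolynomial.pderiv j).toLinearMap)
    (by
      intro f hf
      have hf' : f ∈ truncIdeal F p n := hf
      simp only [LinearMap.mem_ker, LinearMap.coe_comp, Function.comp_apply,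
        AlgHom.toLinearMap_apply, Ideal.Quotient.mkₐ_eq_mk, Derivation.coeFn_coe]
      exact truncIdeal_pderiv_mem F p n j hf')

lemma DjL_mk [CharP F p] (j : Fin n) (f : MvPolynomial (Fin n) F) :
    DjL F p n j (Ideal.Quotient.mk _ f) = Ideal.Quotient.mk _ (MvPolynomial.pderiv j f) := by
  rw [DjL, liftF_mk]
  simp

/-- The partial derivative `D_j = ∂/∂x_j`, as a derivation of `A(n)`. -/
def Dj [CharP F p] (j : Fin n) : Witt F p n where
  toLinearMap := DjL F p n j
  map_one_eq_zero' := by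
    have h1 : (1 : TruncP F p n) = Ideal.Quotient.mk _ (1 : MvPolynomial (Fin n) F) :=
      (map_one _).symm
    rw [LinearMap.coe_mk] at *
    show DjL F p n j 1 = 0
    rw [h1, DjL_mk]
    simp
  leibniz' := by
    intro a b
    obtain ⟨x, rfl⟩ := Ideal.Quotient.mk_surjective a
    obtain ⟨y, rfl⟩ := Ideal.Quotient.mk_surjective b
    show DjL F p n j _ = _ • DjL F p n j _ + _ • DjL F p n j _
    rw [← map_mul, DjL_mk, DjL_mk, DjL_mk, smul_eq_mul, smul_eq_mul, ← map_mul, ← map_mul,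
      ← map_add]
    congr 1
    have := (MvPolynomial.pderiv j).leibniz x y
    simpa [smul_eq_mul] using this
section Cochains

variable (F : Type*) [Field F] {L : Type*} [AddCommGroup L] [Module F L]

/-- A map of two arguments which is `F`-linear in each argument. -/
def IsBilinear (ψ : L → L → L) : Prop :=
  (∀ x, IsLinearMap F (ψ x)) ∧ ∀ y, IsLinearMap F fun x => ψ x y

/-- A 2-cochain with adjoint coefficients: an alternating `F`-bilinear map. -/
def IsCochain (ψ : L → L → L) : Prop :=
  IsBilinear F ψ ∧ ∀ x, ψ x x = 0

/-- A 2-cocycle with adjoint coefficients, for the bracket `B`. -/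
def IsCocycle (B : L → L → L) (ψ : L → L → L) : Prop :=
  IsCochain F ψ ∧ ∀ x y z,
    B x (ψ y z) - B y (ψ x z) + B z (ψ x y)
      - ψ (B x y) z + ψ (B x z) y - ψ (B y z) x = 0

/-- A 2-coboundary with adjoint coefficients, for the bracket `B`. -/
def IsCoboundary (B : L → L → L) (ψ : L → L → L) : Prop :=
  ∃ φ : L →ₗ[F] L, ∀ x y, ψ x y = B x (φ y) - B y (φ x) - φ (B x y)

/-- A 2-cocycle of a subspace `V` (closed under the bracket `B` of the ambient space),
with adjoint coefficients.  The cochain is recorded as an everywhere-defined bilinear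
map preserving `V`; only its restriction to `V` is relevant. -/
def IsCocycleOn (V : Submodule F L) (B : L → L → L) (ψ : L → L → L) : Prop :=
  IsBilinear F ψ ∧ (∀ x ∈ V, ∀ y ∈ V, ψ x y ∈ V) ∧ (∀ x ∈ V, ψ x x = 0) ∧
    ∀ x ∈ V, ∀ y ∈ V, ∀ z ∈ V,
      B x (ψ y z) - B y (ψ x z) + B z (ψ x y)
        - ψ (B x y) z + ψ (B x z) y - ψ (B y z) x = 0

/-- A 2-coboundary of a subspace `V`, with adjoint coefficients. -/
def IsCoboundaryOn (V : Submodule F L) (B : L → L → L) (ψ : L → L → L) : Prop :=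
  ∃ φ : L →ₗ[F] L, (∀ x ∈ V, φ x ∈ V) ∧
    ∀ x ∈ V, ∀ y ∈ V, ψ x y = B x (φ y) - B y (φ x) - φ (B x y)

/-- A derivation of a subspace `V` closed under the bracket `B`:
an `F`-linear map preserving `V` and satisfying the Leibniz rule on `V`. -/
def IsDerivationOn (V : Submodule F L) (B : L → L → L) (γ : L →ₗ[F] L) : Prop :=
  (∀ x ∈ V, γ x ∈ V) ∧ ∀ x ∈ V, ∀ y ∈ V, γ (B x y) = B (γ x) y + B x (γ y)

/-- An inner derivation of a subspace `V`: a map agreeing on `V` with `ad z = B z ·`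
for some `z ∈ V`. -/
def IsInnerOn (V : Submodule F L) (B : L → L → L) (δ : L → L) : Prop :=
  ∃ z ∈ V, ∀ y ∈ V, δ y = B z y

/-- An inner derivation: `δ = ad z = B z ·` for some `z`. -/
def IsInner (B : L → L → L) (δ : L → L) : Prop := ∃ z, ∀ y, δ y = B z y

/-- The squaring `Sq(γ)(x,y) = ∑_{i=1}^{p-1} [γ^i(x), γ^{p-i}(y)]/(i!·(p-i)!)`
of an operator `γ`, relative to the bracket `B`. -/
def Squaring (p : ℕ) (B : L → L → L) (γ : L → L) : L → L → L := fun x y =>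
  ∑ i ∈ Finset.Ioo 0 p,
    (((Nat.factorial i * Nat.factorial (p - i) : ℕ) : F))⁻¹ • B (γ^[i] x) (γ^[p - i] y)

/-- `Sq(z) := Sq(ad z)` for an element `z`. -/
def SqE (p : ℕ) (B : L → L → L) (z : L) : L → L → L :=
  Squaring F p B (fun y => B z y)

/-- The Hochschild operator
`H_ψ(x)(y) = ∑_{j=0}^{p-1} (ad x)^j (ψ(x, (ad x)^{p-1-j}(y))) − ψ(x^{[p]}, y)`,
for the bracket `B`, the 2-cochain `ψ`, and the chosen `p`-th power `xp` of `x`. -/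
def HOp (p : ℕ) (B : L → L → L) (ψ : L → L → L) (x xp : L) : L → L := fun y =>
  (∑ j ∈ Finset.range p, (fun z => B x z)^[j] (ψ x ((fun z => B x z)^[p - 1 - j] y)))
    - ψ xp y

end Cochains

section Symplectic

variable (F : Type*) [Field F] (m : ℕ)

/-- The sign `σ(j)` for `1 ≤ j ≤ 2m`: `1` if `j ≤ m` and `−1` if `j > m`. -/
def sg (j : Fin (2 * m)) : F := if (j : ℕ) < m then 1 else -1

/-- The conjugate index `j' = j ± m`. -/
def cj (j : Fin (2 * m)) : Fin (2 * m) :=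
  if h : (j : ℕ) < m then ⟨(j : ℕ) + m, by omega⟩
  else ⟨(j : ℕ) - m, by have := j.isLt; omega⟩

end Symplectic

section Hamiltonian

variable (F : Type*) [Field F] (p m : ℕ) [CharP F p]

/-- The Poisson operator `D_H(f)(g) = ∑_{j=1}^{2m} σ(j)·D_j(f)·D_{j'}(g)` on `A(2m)`. -/
def DHH (f g : TruncP F p (2 * m)) : TruncP F p (2 * m) :=
  ∑ j : Fin (2 * m), sg F m j • (Dj F p (2 * m) j f * Dj F p (2 * m) (cj m j) g)

/-- The bracket of the Hamiltonian algebra: the Poisson bracket `D_H(f)(g)` with its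
constant term removed (realizing the quotient by the central element `1` on the span
of the non-constant monomials). -/
def Hbr (f g : TruncP F p (2 * m)) : TruncP F p (2 * m) :=
  DHH F p m f g - coeffT F p (2 * m) (fun _ => 0) (DHH F p m f g) • (1 : TruncP F p (2 * m))

/-- The Hamiltonian algebra `H(n)`, `n = 2m`: the span of the monomials `x^a` with
`x^a ≠ 1, x^τ`. -/
def Hsub : Submodule F (TruncP F p (2 * m)) :=
  Submodule.span F
    {f | ∃ a : Fin (2 * m) → ℕ,
      (∀ i, a i < p) ∧ a ≠ (fun _ => 0) ∧ a ≠ (fun _ => p - 1) ∧ f = xpow F p (2 * m) a}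

open scoped Classical in
/-- The `[p]`-th power of the monomial `x^a` in `H(n)`: `x^a` itself if
`x^a = x_i x_{i'}` for some `1 ≤ i ≤ m`, and `0` otherwise. -/
noncomputable def HpPow (a : Fin (2 * m) → ℕ) : TruncP F p (2 * m) :=
  if ∃ i : Fin (2 * m), (i : ℕ) < m ∧ a = Pi.single i 1 + Pi.single (cj m i) 1
  then xpow F p (2 * m) a else 0

/-- The characterization of the cocycle `Φ` of `H(n)`: the alternating bilinear map
with `Φ(x^a, x^b) = ∑_{|δ|=3, δ≤a, δ̂≤b} binom(a,δ)·binom(b,δ̂)·σ(δ)·δ!·x^{a+b−δ−δ̂}`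
on monomials. -/
def IsPhiH (Φ : TruncP F p (2 * m) → TruncP F p (2 * m) → TruncP F p (2 * m)) : Prop :=
  IsBilinear F Φ ∧ (∀ x, Φ x x = 0) ∧
    ∀ a b : Fin (2 * m) → ℕ, (∀ i, a i < p) → (∀ i, b i < p) →
      Φ (xpow F p (2 * m) a) (xpow F p (2 * m) b) =
        ∑ d : Fin (2 * m) → Fin 4,
          if (∑ i, (d i : ℕ)) = 3 ∧ (∀ i, (d i : ℕ) ≤ a i) ∧ (∀ i, (d (cj m i) : ℕ) ≤ b i)
          then ((∏ i, (((a i).choose (d i) : ℕ) : F)) *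
                (∏ i, (((b i).choose (d (cj m i)) : ℕ) : F)) *
                (∏ i, sg F m i ^ (d i : ℕ)) *
                (∏ i, (((d i : ℕ).factorial : ℕ) : F))) •
              xpow F p (2 * m)
                (a + b - (fun i => (d i : ℕ)) - (fun i => (d (cj m i) : ℕ)))
          else 0

end Hamiltonian

/-! ### Homogeneous polynomials in a number operator and a central element -/

/-- `IsHomog N c d q` says that `q` is homogeneous of degree `d` as an integer polynomial in `N` and
`c`. The predicate is used with `c` central, so only left multiplications occur. -/
inductive IsHomog {R : Type*} [Ring R] (N c : R) : ℕ → R → Prop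
  | one : IsHomog N c 0 1
  | add {d : ℕ} {q r : R} : IsHomog N c d q → IsHomog N c d r → IsHomog N c d (q + r)
  | neg {d : ℕ} {q : R} : IsHomog N c d q → IsHomog N c d (-q)
  | mul_left {d : ℕ} {q : R} : IsHomog N c d q → IsHomog N c (d + 1) (N * q)
  | mul_right {d : ℕ} {q : R} : IsHomog N c d q → IsHomog N c (d + 1) (c * q)

section ring
variable {R : Type*} [Ring R]

/-- Additivity of the Frobenius for commuting elements of a noncommutative ring. -/
lemma add_pow_p {p : ℕ} (hp : p.Prime) (hR : (p : R) = 0) {x y : R} (h : Commute x y) :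
    (x + y) ^ p = x ^ p + y ^ p := by
  obtain ⟨r, hr⟩ := h.exists_add_pow_prime_eq hp
  rw [hr, hR]; simp

lemma IsHomog.commute {N c : R} {z : R} (hN : Commute z N) (hc : Commute z c) {d : ℕ} {q : R}
    (h : IsHomog N c d q) : Commute z q := by
  induction h with
  | one => exact Commute.one_right z
  | add _ _ h1 h2 => exact h1.add_right h2
  | neg _ h1 => exact h1.neg_right
  | mul_left _ h1 => exact hN.mul_right h1
  | mul_right _ h1 => exact hc.mul_right h1

lemma IsHomog.mul {N c : R} {d e : ℕ} {q r : R} (hq : IsHomog N c d q) (hr : IsHomog N c e r) :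
    IsHomog N c (d + e) (q * r) := by
  induction hq with
  | one => simpa using hr
  | add _ _ h1 h2 => rw [add_mul]; exact h1.add h2
  | neg _ h1 => rw [neg_mul]; exact h1.neg
  | mul_left _ h1 => rw [mul_assoc, add_right_comm]; exact h1.mul_left
  | mul_right _ h1 => rw [mul_assoc, add_right_comm]; exact h1.mul_right

/-- Moving `Y` past a polynomial in `N` replaces `N` by the linear form `t` (in applications
`t = N ± c`), which preserves the degree. -/
lemma IsHomog.shift {N c : R} (hc : ∀ z, Commute c z) {Y t : R} (ht : IsHomog N c 1 t)
    (hY : Y * N = t * Y) {d : ℕ} {q : R} (h : IsHomog N c d q) :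
    ∃ q', IsHomog N c d q' ∧ Y * q = q' * Y := by
  induction h with
  | one => exact ⟨1, .one, by simp⟩
  | add _ _ h1 h2 =>
    obtain ⟨a, ha, ha'⟩ := h1
    obtain ⟨b, hb, hb'⟩ := h2
    exact ⟨a + b, ha.add hb, by rw [mul_add, ha', hb', add_mul]⟩
  | neg _ h1 =>
    obtain ⟨a, ha, ha'⟩ := h1
    exact ⟨-a, ha.neg, by rw [mul_neg, ha', neg_mul]⟩
  | mul_left _ h1 =>
    obtain ⟨a, ha, ha'⟩ := h1
    refine ⟨t * a, ?_, by rw [← mul_assoc, hY, mul_assoc, ha', mul_assoc]⟩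
    rw [add_comm]; exact ht.mul ha
  | mul_right _ h1 =>
    obtain ⟨a, ha, ha'⟩ := h1
    exact ⟨c * a, ha.mul_right, by rw [← mul_assoc, ← (hc Y).eq, mul_assoc, ha', mul_assoc]⟩

lemma IsHomog.shift_pow {N c : R} (hc : ∀ z, Commute c z) {Y t : R} (ht : IsHomog N c 1 t)
    (hY : Y * N = t * Y) (j : ℕ) {d : ℕ} {q : R} (h : IsHomog N c d q) :
    ∃ q', IsHomog N c d q' ∧ Y ^ j * q = q' * Y ^ j := by
  induction j with
  | zero => exact ⟨q, h, by simp⟩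
  | succ j ih =>
    obtain ⟨a, ha, ha'⟩ := ih
    obtain ⟨b, hb, hb'⟩ := IsHomog.shift hc ht hY ha
    exact ⟨b, hb, by rw [pow_succ', mul_assoc, ha', ← mul_assoc, hb', mul_assoc]⟩

/-- Elements `q Y ^ j` with `j ≥ 1` are nilpotent: in their `p`-th power all the factors `Y` can be
collected on the right. -/
lemma IsHomog.mul_pow_eq_zero {N c : R} (hc : ∀ z, Commute c z) {Y t : R}
    (ht : IsHomog N c 1 t) (hY : Y * N = t * Y) {p j : ℕ} (hj : 1 ≤ j) (hYp : Y ^ p = 0)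
    {d : ℕ} {q : R} (h : IsHomog N c d q) : (q * Y ^ j) ^ p = 0 := by
  have key : ∀ k : ℕ, ∃ r, (q * Y ^ j) ^ k = r * Y ^ (j * k) := by
    intro k
    induction k with
    | zero => exact ⟨1, by simp⟩
    | succ k ih =>
      obtain ⟨r, hr⟩ := ih
      obtain ⟨q', -, hq'⟩ := IsHomog.shift_pow hc ht hY (j * k) h
      refine ⟨r * q', ?_⟩
      rw [pow_succ, hr, mul_assoc, ← mul_assoc (Y ^ (j * k)), hq', mul_assoc q', ← pow_add,
        mul_assoc, mul_add, mul_one]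
  obtain ⟨r, hr⟩ := key p
  rw [hr, mul_comm j p, pow_mul, hYp, zero_pow (by omega), mul_zero]

/-- By `N ^ p = c ^ (p - 1) N`, the `p`-th power of each factor `N` or `c` contributes `c ^ (p - 1)`. -/
lemma IsHomog.pow_p_dvd {N c : R} (hc : ∀ z, Commute c z) {p : ℕ} (hp : p.Prime)
    (hodd : Odd p) (hR : (p : R) = 0) (hN : N ^ p = c ^ (p - 1) * N) {d : ℕ} {q : R}
    (h : IsHomog N c d q) : c ^ ((p - 1) * d) ∣ q ^ p := by
  have hNN : ∀ {e : ℕ} {r : R}, IsHomog N c e r → Commute N r :=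
    fun hr => hr.commute (Commute.refl N) (hc N).symm
  induction h with
  | one => simp
  | add h1 h2 ih1 ih2 =>
    rw [add_pow_p hp hR (h2.commute (hNN h1).symm (hc _).symm)]
    exact dvd_add ih1 ih2
  | neg _ ih => rw [hodd.neg_pow]; exact (dvd_neg).2 ih
  | mul_left h1 ih =>
    obtain ⟨r, hr⟩ := ih
    rw [(hNN h1).mul_pow, hN, hr, mul_add, mul_one, add_comm, pow_add]
    refine ⟨N * r, ?_⟩
    simp only [mul_assoc]
    rw [← mul_assoc N, ((hc N).pow_left _).symm.eq, mul_assoc]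
  | mul_right h1 ih =>
    obtain ⟨r, hr⟩ := ih
    rw [(hc _).mul_pow, hr, mul_add, mul_one, add_comm, pow_add]
    refine ⟨c * r, ?_⟩
    have : c ^ p = c ^ (p - 1) * c := by rw [← pow_succ, Nat.sub_add_cancel hp.one_le]
    rw [this]
    simp only [mul_assoc]
    rw [← mul_assoc c, ((hc c).pow_left _).symm.eq, mul_assoc]

end ring

/-! ### The identity `(Y P) ^ p = c ^ (p - 1) * (Y P)` -/

open Polynomial in
/-- The homogeneous form of `∏ (x + i) = x ^ p - x`, the product being over the prime field. -/
lemma prod_field {K : Type*} [Field K] {p : ℕ} [Fact p.Prime] [CharP K p] (x c : K) :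
    ∏ i ∈ Finset.range p, (x + (i : K) * c) = x ^ p - c ^ (p - 1) * x := by
  have hp : p.Prime := Fact.out
  have h1 : ∏ a : ZMod p, (X - C a : (ZMod p)[X]) = X ^ p - X := by
    have := FiniteField.roots_X_pow_card_sub_X (ZMod p)
    rw [ZMod.card] at this
    have hm : (X ^ p - X : (ZMod p)[X]).Monic :=
      monic_X_pow_sub (by rw [degree_X]; exact_mod_cast hp.one_lt)
    have h2 := prod_multiset_X_sub_C_of_monic_of_roots_card_eq hm (by
      rw [this, FiniteField.X_pow_card_sub_X_natDegree_eq (ZMod p) hp.one_lt]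
      simp [ZMod.card])
    rw [this] at h2
    exact h2
  have h3 : ∀ y : K, ∏ i ∈ Finset.range p, (y + (i : K)) = y ^ p - y := by
    intro y
    have h4 := congrArg (eval₂ (ZMod.castHom dvd_rfl K) y) h1
    rw [eval₂_finsetProd] at h4
    simp only [eval₂_sub, eval₂_X, eval₂_C, eval₂_X_pow] at h4
    rw [← h4, ← Equiv.prod_comp (Equiv.neg (ZMod p))]
    symm
    refine Finset.prod_bij (fun a _ => a.val) (fun a _ => Finset.mem_range.2 (ZMod.val_lt a))
      (fun a _ b _ h => ZMod.val_injective p h)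
      (fun b hb => ⟨(b : ZMod p), Finset.mem_univ _, ZMod.val_cast_of_lt (Finset.mem_range.1 hb)⟩)
      (fun a _ => ?_)
    simp [ZMod.natCast_val]
  rcases eq_or_ne c 0 with rfl | hc
  · simp [zero_pow (Nat.sub_ne_zero_of_lt hp.one_lt)]
  have : ∀ i ∈ Finset.range p, (x + (i : K) * c) = c * (x / c + i) := by
    intro i _; field_simp
  rw [Finset.prod_congr rfl this, Finset.prod_mul_distrib, h3]
  have hcp : c ^ p = c ^ (p - 1) * c := by rw [← pow_succ, Nat.sub_add_cancel hp.one_le]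
  simp only [Finset.prod_const, Finset.card_range]
  rw [mul_sub, div_pow, mul_div_cancel₀ _ (pow_ne_zero _ hc)]
  rw [hcp]; field_simp

lemma prod_domain {K : Type*} [CommRing K] [IsDomain K] {p : ℕ} [Fact p.Prime] [CharP K p]
    (x c : K) :
    ∏ i ∈ Finset.range p, (x + (i : K) * c) = x ^ p - c ^ (p - 1) * x := by
  have inj := IsFractionRing.injective K (FractionRing K)
  have : CharP (FractionRing K) p := charP_of_injective_algebraMap inj p
  apply inj
  have := prod_field (p := p) (algebraMap K (FractionRing K) x) (algebraMap K (FractionRing K) c)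
  simpa using this

open Polynomial in
/-- With `N = X' P`, moving the `X'` to the right shows `X' ^ k P ^ k = ∏_{i < k} (N + i c)`. For
`k = p` the left side is zero and the right side is `N ^ p - c ^ (p - 1) N`. The product is evaluated
in `F[c][N]` and transported along the evaluation map `Ψ`. -/
lemma number_pow {F R : Type*} [Field F] [Ring R] [Algebra F R] {p : ℕ} (hp : p.Prime) [CharP F p]
    {X' P c : R} (hc : ∀ z, Commute c z) (hXP : X' * P - P * X' = c)
    (hX : X' ^ p = 0) : (X' * P) ^ p = c ^ (p - 1) * (X' * P) := by
  have := Fact.mk hp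
  set N := X' * P with hN
  have hφ : ∀ (a : F[X]) (z : R), Commute (aeval c a) z := by
    intro a z
    induction a using Polynomial.induction_on' with
    | add f g hf hg => rw [map_add]; exact hf.add_left hg
    | monomial n r =>
      rw [aeval_monomial]
      exact (show Commute (algebraMap F R r) z from Algebra.commutes r z).mul_left ((hc z).pow_left n)
  let Ψ : F[X][X] →+* R := eval₂RingHom' (aeval c : F[X] →ₐ[F] R).toRingHom N (fun a => hφ a N)
  have hΨX : Ψ X = N := eval₂_X _ _
  have hΨC : Ψ (C X) = c := by
    show eval₂ _ _ _ = c
    rw [eval₂_C]; simp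
  have h1 := congrArg Ψ (prod_domain (p := p) (X : F[X][X]) (C X))
  have hXN : X' * N = (N + c) * X' := by
    have h0 : N = P * X' + c := by rw [hN, ← hXP]; abel
    calc X' * N = X' * (P * X' + c) := by rw [← h0]
      _ = (N + c) * X' := by rw [mul_add, ← mul_assoc, ← hN, ← (hc X').eq, add_mul]
  have hshift : ∀ k : ℕ, X' * Ψ (∏ i ∈ Finset.range k, (X + (i : F[X][X]) * C X))
      = Ψ (∏ i ∈ Finset.range k, (X + ((i + 1 : ℕ) : F[X][X]) * C X)) * X' := by
    intro k
    induction k with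
    | zero => simp
    | succ k ih =>
      rw [Finset.prod_range_succ, Finset.prod_range_succ, map_mul, map_mul, ← mul_assoc, ih,
        mul_assoc, mul_assoc]
      congr 1
      simp only [map_add, map_mul, map_natCast, hΨX, hΨC, mul_add, hXN, add_mul]
      push_cast
      rw [add_mul, one_mul, ← mul_assoc X', ← (Nat.cast_commute k X').eq, mul_assoc (k : R),
        ← (hc X').eq]
      simp only [add_mul, mul_assoc]; abel
  have key : ∀ k : ℕ, X' ^ k * P ^ k = Ψ (∏ i ∈ Finset.range k, (X + (i : F[X][X]) * C X)) := by
    intro k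
    induction k with
    | zero => simp
    | succ k ih =>
      rw [pow_succ', pow_succ, mul_assoc, ← mul_assoc (X' ^ k), ih, ← mul_assoc, hshift, mul_assoc,
        ← hN, Finset.prod_range_succ', map_mul]
      simp [hΨX]
  rw [← key, hX, zero_mul, map_sub, map_mul, map_pow, map_pow, hΨX, hΨC] at h1
  exact (sub_eq_zero.1 h1.symm)

/-! ### Weyl-ordered monomials in one conjugate pair -/

section mode
variable {F R : Type*} [Field F] [Ring R] [Algebra F R] {p : ℕ} [CharP F p]

/-- `W a` is the Weyl-ordered monomial of exponents `a` in `Y` and `b` in `P`. Up to the factor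
`2 ^ a` it is `q P ^ (b - a)` if `a ≤ b` and `q Y ^ (a - b)` if `a ≥ b`, with `q` homogeneous of
degree `min a b` in `Y P` and `c`. -/
lemma mode_pow (hp : p.Prime) (hp5 : 5 ≤ p) {Y P c : R} (hc : ∀ z, Commute c z)
    (hYP : Y * P - P * Y = c) (hY : Y ^ p = 0) (hP : P ^ p = 0) (b : ℕ) (W : ℕ → R)
    (h0 : W 0 = P ^ b) (hs : ∀ a, (2 : F) • W (a + 1) = Y * W a + W a * Y) (a : ℕ) :
    (a ≠ b → W a ^ p = 0) ∧ c ^ ((p - 1) * min a b) ∣ W a ^ p := by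
  have hodd : Odd p := hp.odd_of_ne_two (by omega)
  have h2F : (2 : F) ≠ 0 := by
    intro h
    have := (CharP.cast_eq_zero_iff F p 2).1 (by exact_mod_cast h)
    have := Nat.le_of_dvd (by norm_num) this
    omega
  have hR : (p : R) = 0 := by
    rw [← map_natCast (algebraMap F R), CharP.cast_eq_zero, map_zero]
  obtain ⟨N, hN⟩ : ∃ N, N = Y * P := ⟨_, rfl⟩
  have hPY : P * Y = N - c := by rw [hN, ← hYP]; abel
  have hNp : N ^ p = c ^ (p - 1) * N := by rw [hN]; exact number_pow (F := F) hp hc hYP hY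
  have hYN : Y * N = (N + c) * Y := by
    calc Y * N = Y * (P * Y + c) := by rw [hPY]; congr 1; abel
      _ = (N + c) * Y := by rw [mul_add, ← mul_assoc, ← hN, ← (hc Y).eq, add_mul]
  have hPN : P * N = (N - c) * P := by rw [hN, ← mul_assoc, hPY, hN]
  have tN : IsHomog N c 1 N := by simpa using (IsHomog.one (N := N) (c := c)).mul_left
  have tc : IsHomog N c 1 c := by simpa using (IsHomog.one (N := N) (c := c)).mul_right
  have tplus : IsHomog N c 1 (N + c) := tN.add tc
  have tminus : IsHomog N c 1 (N - c) := by rw [sub_eq_add_neg]; exact tN.add tc.neg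
  have hcomm : ∀ {d : ℕ} {q : R}, IsHomog N c d q → Commute N q :=
    fun hq => hq.commute (Commute.refl N) (hc N).symm
  -- normal forms of the scaled iterates
  have low : ∀ a, a ≤ b → ∃ q, IsHomog N c a q ∧ (2 : F) ^ a • W a = q * P ^ (b - a) := by
    intro a
    induction a with
    | zero => intro _; exact ⟨1, .one, by simp [h0]⟩
    | succ a ih =>
      intro hab
      obtain ⟨q, hq, hqW⟩ := ih (by omega)
      obtain ⟨q₁, hq₁, hq₁'⟩ := IsHomog.shift hc tplus hYN hq
      obtain ⟨t₁, ht₁, ht₁'⟩ := IsHomog.shift_pow hc tminus hPN (b - (a + 1)) tminus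
      refine ⟨N * q₁ + q * t₁, hq₁.mul_left.add (hq.mul ht₁), ?_⟩
      have e : b - a = (b - (a + 1)) + 1 := by omega
      rw [pow_succ, mul_smul, hs, smul_add, ← mul_smul_comm, ← smul_mul_assoc, hqW, add_mul, e]
      congr 1
      · rw [← mul_assoc, hq₁', (hcomm hq₁).eq, hN, pow_succ']; simp only [mul_assoc]
      · rw [pow_succ, mul_assoc, mul_assoc, hPY, ht₁', mul_assoc]
  have high : ∀ k, ∃ q, IsHomog N c b q ∧ (2 : F) ^ (b + k) • W (b + k) = q * Y ^ k := by
    intro k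
    induction k with
    | zero => simpa using low b le_rfl
    | succ k ih =>
      obtain ⟨q, hq, hqW⟩ := ih
      obtain ⟨q₁, hq₁, hq₁'⟩ := IsHomog.shift hc tplus hYN hq
      refine ⟨q₁ + q, hq₁.add hq, ?_⟩
      rw [← add_assoc, pow_succ, mul_smul, hs, smul_add, ← mul_smul_comm, ← smul_mul_assoc, hqW,
        add_mul, ← mul_assoc, hq₁', mul_assoc, mul_assoc, ← pow_succ, ← pow_succ']
  have hu : ∀ a, ((2 : F) ^ a) ^ p ≠ 0 := fun a => pow_ne_zero _ (pow_ne_zero _ h2F)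
  have zero_of : ∀ a, ((2 : F) ^ a • W a) ^ p = 0 → W a ^ p = 0 := by
    intro a h
    rw [smul_pow] at h
    exact (smul_eq_zero_iff_right (hu a)).1 h
  rcases lt_trichotomy a b with hab | rfl | hab
  · obtain ⟨q, hq, hqW⟩ := low a hab.le
    have : W a ^ p = 0 := zero_of a (by
      rw [hqW]; exact IsHomog.mul_pow_eq_zero hc tminus hPN (by omega) hP hq)
    exact ⟨fun _ => this, by rw [this]; exact dvd_zero _⟩
  · obtain ⟨q, hq, hqW⟩ := low a le_rfl
    refine ⟨fun h => absurd rfl h, ?_⟩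
    have h1 := IsHomog.pow_p_dvd hc hp hodd hR hNp hq
    rw [Nat.sub_self, pow_zero, mul_one] at hqW
    rw [← hqW, smul_pow] at h1
    obtain ⟨r, hr⟩ := h1
    rw [min_self]
    refine ⟨(((2 : F) ^ a) ^ p)⁻¹ • r, ?_⟩
    rw [mul_smul_comm, ← hr, inv_smul_smul₀ (hu a)]
  · obtain ⟨k, rfl⟩ := Nat.exists_eq_add_of_lt hab
    obtain ⟨q, hq, hqW⟩ := high (k + 1)
    have : W (b + k + 1) ^ p = 0 := zero_of _ (by
      rw [add_assoc, hqW]; exact IsHomog.mul_pow_eq_zero hc tplus hYN (by omega) hY hq)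
    exact ⟨fun _ => this, by rw [this]; exact dvd_zero _⟩

end mode

/-! ### Weyl-ordered monomials in several conjugate pairs -/

section index
variable {F : Type*} [Field F] {m : ℕ}

lemma cj_cj (j : Fin (2 * m)) : cj m (cj m j) = j := by
  have := j.isLt
  unfold cj
  ext
  by_cases h : (j : ℕ) < m
  · simp [h]
  · have h' : (j : ℕ) - m < m := by omega
    simp only [h, dite_false, h', dite_true]; omega

lemma sg_cj (j : Fin (2 * m)) : sg F m (cj m j) = - sg F m j := by
  have := j.isLt
  unfold sg cj
  by_cases h : (j : ℕ) < m
  · simp [h]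
  · have h' : (j : ℕ) - m < m := by omega
    simp [h, h']

lemma cj_inj {i j : Fin (2 * m)} : cj m i = cj m j ↔ i = j :=
  ⟨fun h => by rw [← cj_cj i, h, cj_cj], fun h => by rw [h]⟩

/-- The index `i < m` viewed in `Fin (2 * m)`; the pairs of conjugate indices are
`(lo i, cj m (lo i))`. -/
def lo (i : Fin m) : Fin (2 * m) := ⟨i, by omega⟩

lemma lo_inj {i j : Fin m} : lo i = lo j ↔ i = j := by
  simp [lo, Fin.ext_iff]

lemma lo_ne_cj (i j : Fin m) : lo i ≠ cj m (lo j) := by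
  have := i.isLt
  have h : ((lo j : Fin (2 * m)) : ℕ) < m := j.isLt
  intro e
  have e' := congrArg Fin.val e
  rw [cj, dif_pos h] at e'
  simp only [lo] at e'
  omega

lemma eq_lo_or (j : Fin (2 * m)) : ∃ i : Fin m, j = lo i ∨ j = cj m (lo i) := by
  have := j.isLt
  by_cases h : (j : ℕ) < m
  · exact ⟨⟨j, h⟩, Or.inl rfl⟩
  · refine ⟨⟨(j : ℕ) - m, by omega⟩, Or.inr ?_⟩
    have h' : (j : ℕ) - m < m := by omega
    have h'' : ((lo ⟨(j : ℕ) - m, h'⟩ : Fin (2 * m)) : ℕ) < m := h'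
    ext
    rw [cj, dif_pos h'']
    simp only [lo]; omega

lemma sum_pairs {M : Type*} [AddCommMonoid M] (f : Fin (2 * m) → M) :
    ∑ j, f j = ∑ i : Fin m, (f (lo i) + f (cj m (lo i))) := by
  classical
  rw [Finset.sum_add_distrib]
  have h1 : ∑ i : Fin m, f (lo i) = ∑ j ∈ Finset.univ.image lo, f j :=
    (Finset.sum_image fun _ _ _ _ h => lo_inj.1 h).symm
  have h2 : ∑ i : Fin m, f (cj m (lo i)) = ∑ j ∈ Finset.univ.image (fun i => cj m (lo i)), f j :=
    (Finset.sum_image fun _ _ _ _ h => lo_inj.1 (cj_inj.1 h)).symm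
  rw [h1, h2, ← Finset.sum_union]
  · congr 1
    ext j
    obtain ⟨i, h | h⟩ := eq_lo_or j
    · simp [h]
    · simp [h]
  · rw [Finset.disjoint_left]
    intro j hj hj'
    simp only [Finset.mem_image, Finset.mem_univ, true_and] at hj hj'
    obtain ⟨i, rfl⟩ := hj
    obtain ⟨k, hk⟩ := hj'
    exact lo_ne_cj i k hk.symm

end index

/-- `IsWeyl u v a Z`: `Z` is obtained from `1` by steps `Z ↦ u i * Z + Z * v i`, where `i` is used
`a i` times. When `u i - v i` commutes with `Z`, such a step is the symmetrized product of `Z` with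
`u i + v i`, so that `Z` is the Weyl-ordered monomial of exponent `a` in the `u i + v i`. The
order of the steps is not recorded. -/
inductive IsWeyl {R : Type*} [Ring R] {ι : Type*} [DecidableEq ι] (u v : ι → R) : (ι → ℕ) → R → Prop
  | one : IsWeyl u v 0 1
  | step {a : ι → ℕ} {Z : R} (i : ι) : IsWeyl u v a Z →
      IsWeyl u v (a + Pi.single i 1) (u i * Z + Z * v i)

section weyl
variable {F R : Type*} [Field F] [Ring R] [Algebra F R] {m : ℕ}

/-- Heisenberg relations with central parameter `s`, modelled on `u i = x_i` and
`v i = s σ(i) D_{i'}`. -/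
structure HeisRel (F : Type*) {R : Type*} [Field F] [Ring R] [Algebra F R] {m : ℕ}
    (u v : Fin (2 * m) → R) (s : R) : Prop where
  central : ∀ z, Commute s z
  uu : ∀ i j, Commute (u i) (u j)
  vv : ∀ i j, Commute (v i) (v j)
  vu : ∀ i j, v i * u j = u j * v i + if j = cj m i then sg F m i • s else 0

variable {u v : Fin (2 * m) → R} {s : R}

lemma HeisRel.neg (h : HeisRel F u v s) : HeisRel F u (fun i => - v i) (-s) where
  central z := (h.central z).neg_left
  uu := h.uu
  vv i j := ((h.vv i j).neg_left).neg_right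
  vu i j := by
    rw [neg_mul, h.vu, mul_neg]
    split_ifs <;> simp; abel

/-- Left star multiplication by a generator commutes with right star multiplication by another. -/
lemma HeisRel.commute_left_right (h : HeisRel F u v s) (i j : Fin (2 * m)) :
    Commute (u i + v i) (u j - v j) := by
  show _ * _ = _ * _
  have h1 := h.vu i j
  have h2 := h.vu j i
  have h3 : (if j = cj m i then sg F m i • s else 0) + (if i = cj m j then sg F m j • s else 0)
      = 0 := by
    by_cases e : j = cj m i
    · subst e
      simp [cj_cj, sg_cj]
    · have e' : i ≠ cj m j := fun h => e (by rw [h, cj_cj])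
      simp [e, e']
  rw [add_mul, mul_sub, mul_sub, sub_mul, mul_add, mul_add, h1, h2, (h.uu i j).eq, (h.vv i j).eq]
  generalize (if j = cj m i then sg F m i • s else 0) = e₁ at h3 ⊢
  generalize (if i = cj m j then sg F m j • s else 0) = e₂ at h3 ⊢
  rw [eq_neg_of_add_eq_zero_left h3]
  abel

variable {p : ℕ} [CharP F p]

lemma two_ne_zero_F (hp5 : 5 ≤ p) : (2 : F) ≠ 0 := by
  intro h
  have := (CharP.cast_eq_zero_iff F p 2).1 (by exact_mod_cast h)
  have := Nat.le_of_dvd (by norm_num) this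
  omega

/-- A Weyl step by `U`, `V` is half an anticommutator with `U + V`. -/
lemma two_smul_step {Z U V : R} (h : Commute (U - V) Z) :
    (2 : F) • (U * Z + Z * V) = (U + V) * Z + Z * (U + V) := by
  have h' := h.eq
  rw [sub_mul, mul_sub, sub_eq_iff_eq_add] at h'
  rw [two_smul, add_mul, mul_add]
  nth_rewrite 2 [h']
  abel

lemma Commute.of_smul {t : F} (ht : t ≠ 0) {y z : R} (h : Commute y (t • z)) : Commute y z := by
  have := h.smul_right t⁻¹
  rwa [inv_smul_smul₀ ht] at this

lemma IsWeyl.commute_sub (h2 : (2 : F) ≠ 0) (h : HeisRel F u v s) {a : Fin (2 * m) → ℕ} {Z : R}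
    (hZ : IsWeyl u v a Z) : ∀ j : Fin (2 * m), Commute (u j - v j) Z := by
  induction hZ with
  | one => exact fun _ => Commute.one_right _
  | @step a Z i hZ ih =>
    intro j
    refine Commute.of_smul h2 ?_
    rw [two_smul_step (ih i)]
    have hX := (h.commute_left_right i j).symm
    exact (hX.mul_right (ih j)).add_right ((ih j).mul_right hX)

/-- Left star multiplications commute with right ones, the latter being the Weyl-ordered monomials
for `-v`. -/
lemma IsWeyl.commute_flip (h2 : (2 : F) ≠ 0) (h : HeisRel F u v s) {a b : Fin (2 * m) → ℕ}
    {Z Z' : R} (hZ : IsWeyl u v a Z) (hZ' : IsWeyl u (fun i => - v i) b Z') : Commute Z Z' := by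
  induction hZ' with
  | one => exact Commute.one_right _
  | @step b Z' i hZ' ih =>
    refine Commute.of_smul h2 ?_
    rw [two_smul_step (hZ'.commute_sub h2 h.neg i)]
    have hX : Commute Z (u i + - v i) := by
      rw [← sub_eq_add_neg]; exact (hZ.commute_sub h2 h i).symm
    exact (hX.mul_right ih).add_right (ih.mul_right hX)

/-- The `k`-fold iterate, starting from `Z`, of the Weyl step `Z ↦ U * Z + Z * V`. -/
def weylIter (U V Z : R) : ℕ → R
  | 0 => Z
  | k + 1 => U * weylIter U V Z k + weylIter U V Z k * V

lemma IsWeyl.iter {a : Fin (2 * m) → ℕ} {Z : R} (hZ : IsWeyl u v a Z) (i : Fin (2 * m)) (k : ℕ) :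
    IsWeyl u v (a + Pi.single i k) (weylIter (u i) (v i) Z k) := by
  induction k with
  | zero => simpa [weylIter] using hZ
  | succ k ih =>
    have := ih.step i
    rwa [add_assoc, ← Pi.single_add] at this

lemma weylIter_commute {z U V Z : R} (hU : Commute z U) (hV : Commute z V) (hZ : Commute z Z)
    (k : ℕ) : Commute z (weylIter U V Z k) := by
  induction k with
  | zero => exact hZ
  | succ k ih => exact (hU.mul_right ih).add_right (ih.mul_right hV)

lemma weylIter_mul {U V Z Z' : R} (hV : Commute Z' V) (k : ℕ) :
    weylIter U V (Z * Z') k = weylIter U V Z k * Z' := by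
  induction k with
  | zero => rfl
  | succ k ih =>
    simp only [weylIter]
    rw [ih, add_mul, mul_assoc, mul_assoc, mul_assoc, hV.eq]

lemma weylIter_self (h2 : (2 : F) ≠ 0) (h : HeisRel F u v s) (i : Fin (2 * m)) (k : ℕ) :
    weylIter (u i) (v i) 1 k = (u i + v i) ^ k := by
  induction k with
  | zero => simp [weylIter]
  | succ k ih =>
    have h1 := two_smul_step (F := F) (((IsWeyl.one (u := u) (v := v)).iter i k).commute_sub h2 h i)
    have h3 := congrArg (fun z => (2 : F)⁻¹ • z) h1
    simp only [inv_smul_smul₀ h2] at h3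
    rw [weylIter, h3, ih, ← pow_succ, ← pow_succ', ← two_smul F, inv_smul_smul₀ h2]

/-- The Weyl-ordered monomial of exponent `a` as the product of the Weyl-ordered monomials of its
conjugate pairs. The factors commute, so `mode_pow` applies to each of them. -/
theorem exists_isWeyl (hp : p.Prime) (hp5 : 5 ≤ p) (h : HeisRel F u v s)
    (hpow : ∀ i, (u i + v i) ^ p = 0) (a : Fin (2 * m) → ℕ) :
    ∃ Z, IsWeyl u v a Z ∧ ((∃ i : Fin m, a (lo i) ≠ a (cj m (lo i))) → Z ^ p = 0) ∧
      ((2 : F) • s) ^ ((p - 1) * ∑ i : Fin m, min (a (lo i)) (a (cj m (lo i)))) ∣ Z ^ p := by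
  classical
  have h2 : (2 : F) ≠ 0 := two_ne_zero_F hp5
  have hc : ∀ z, Commute ((2 : F) • s) z := fun z => (h.central z).smul_left _
  have key : ∀ T : Finset (Fin m), ∃ Z,
      IsWeyl u v (∑ i ∈ T, (Pi.single (cj m (lo i)) (a (cj m (lo i))) + Pi.single (lo i) (a (lo i))))
        Z ∧
      (∀ i, i ∉ T → Commute Z (u (lo i)) ∧ Commute Z (v (lo i)) ∧
        Commute Z (u (cj m (lo i))) ∧ Commute Z (v (cj m (lo i)))) ∧
      ((∃ i ∈ T, a (lo i) ≠ a (cj m (lo i))) → Z ^ p = 0) ∧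
      ((2 : F) • s) ^ ((p - 1) * ∑ i ∈ T, min (a (lo i)) (a (cj m (lo i)))) ∣ Z ^ p := by
    intro T
    induction T using Finset.induction_on with
    | empty =>
      refine ⟨1, by simpa using IsWeyl.one, fun i _ => ⟨.one_left _, .one_left _, .one_left _,
        .one_left _⟩, by simp, by simp⟩
    | insert i T hi ih =>
      obtain ⟨Z, hZ, hcm, hz, hd⟩ := ih
      obtain ⟨c1, c2, c3, c4⟩ := hcm i hi
      set l := lo i with hl
      set W : ℕ → R := weylIter (u l) (v l) ((u (cj m l) + v (cj m l)) ^ a (cj m l)) with hW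
      have hsl : sg F m l = 1 := if_pos i.isLt
      have hWc : ∀ z k, Commute z (u l) → Commute z (v l) → Commute z (u (cj m l)) →
          Commute z (v (cj m l)) → Commute z (W k) := fun z k h1 h2 h3 h4 =>
        weylIter_commute h1 h2 ((h3.add_right h4).pow_right _) k
      have hWw : ∀ k, IsWeyl u v (Pi.single (cj m l) (a (cj m l)) + Pi.single l k) (W k) := by
        intro k
        have := ((IsWeyl.one (u := u) (v := v)).iter (cj m l) (a (cj m l)))
        rw [zero_add, weylIter_self h2 h] at this
        exact this.iter l k
      have hbr : (u l + v l) * (u (cj m l) + v (cj m l)) - (u (cj m l) + v (cj m l)) * (u l + v l)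
          = (2 : F) • s := by
        have e1 := h.vu l (cj m l)
        have e2 := h.vu (cj m l) l
        rw [if_pos rfl, hsl, one_smul] at e1
        rw [if_pos (cj_cj l).symm, sg_cj, hsl, neg_smul, one_smul] at e2
        rw [add_mul, mul_add, mul_add, add_mul, mul_add, mul_add, e1, e2, (h.uu l (cj m l)).eq,
          (h.vv l (cj m l)).eq, two_smul]
        abel
      have hmode := mode_pow (F := F) hp hp5 hc hbr (hpow _) (hpow _) (a (cj m l)) W rfl
        (fun k => by
          show (2 : F) • (u l * W k + W k * v l) = _
          exact two_smul_step ((hWw k).commute_sub h2 h l)) (a l)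
      have hZW : Commute Z (W (a l)) := hWc Z (a l) c1 c2 c3 c4
      refine ⟨W (a l) * Z, ?_, ?_, ?_, ?_⟩
      · rw [Finset.sum_insert hi, add_comm]
        have := (hZ.iter (cj m l) (a (cj m l))).iter l (a l)
        rw [← one_mul Z, weylIter_mul c4, weylIter_self h2 h, weylIter_mul c2] at this
        rwa [add_assoc] at this
      · intro k hk
        rw [Finset.mem_insert, not_or] at hk
        obtain ⟨d1, d2, d3, d4⟩ := hcm k hk.2
        have ne1 : lo k ≠ l := fun e => hk.1 (lo_inj.1 e)
        have ne2 : lo k ≠ cj m l := lo_ne_cj k i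
        have ne3 : cj m (lo k) ≠ l := fun e => lo_ne_cj i k e.symm
        have ne4 : cj m (lo k) ≠ cj m l := fun e => hk.1 (lo_inj.1 (cj_inj.1 e))
        have hvu : ∀ i j, j ≠ cj m i → Commute (v i) (u j) := by
          intro i j e
          have := h.vu i j
          rw [if_neg e, add_zero] at this
          exact this
        refine ⟨(Commute.mul_right (hWc _ _ (h.uu _ _) ?_ (h.uu _ _) ?_) d1.symm).symm,
          (Commute.mul_right (hWc _ _ ?_ (h.vv _ _) ?_ (h.vv _ _)) d2.symm).symm,
          (Commute.mul_right (hWc _ _ (h.uu _ _) ?_ (h.uu _ _) ?_) d3.symm).symm,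
          (Commute.mul_right (hWc _ _ ?_ (h.vv _ _) ?_ (h.vv _ _)) d4.symm).symm⟩
        · exact (hvu _ _ ne2).symm
        · exact (hvu _ _ (by rw [cj_cj]; exact ne1)).symm
        · exact hvu _ _ ne3.symm
        · exact hvu _ _ ne4.symm
        · exact (hvu _ _ ne4).symm
        · exact (hvu _ _ (by rw [cj_cj]; exact ne3)).symm
        · exact hvu _ _ (by rw [cj_cj]; exact ne1.symm)
        · exact hvu _ _ (by rw [cj_cj]; exact ne2.symm)
      · rintro ⟨k, hk, hne⟩
        rw [hZW.symm.mul_pow]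
        rcases Finset.mem_insert.1 hk with rfl | hk
        · rw [hmode.1 hne, zero_mul]
        · rw [hz ⟨k, hk, hne⟩, mul_zero]
      · rw [hZW.symm.mul_pow, Finset.sum_insert hi, mul_add, pow_add]
        obtain ⟨r, hr⟩ := hmode.2
        obtain ⟨r', hr'⟩ := hd
        refine ⟨r * r', ?_⟩
        rw [hr, hr', mul_assoc, ← mul_assoc r, ← ((hc r).pow_left _).eq]
        simp only [mul_assoc]
        rfl
  obtain ⟨Z, hZ, -, hz, hd⟩ := key Finset.univ
  have ha : (∑ i : Fin m, (Pi.single (cj m (lo i)) (a (cj m (lo i))) + Pi.single (lo i) (a (lo i))))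
      = a := by
    have := (sum_pairs fun j => (Pi.single j (a j) : Fin (2 * m) → ℕ)).symm
    rw [Finset.univ_sum_single] at this
    exact (Finset.sum_congr rfl fun _ _ => add_comm _ _).trans this
  rw [ha] at hZ
  exact ⟨Z, hZ, fun ⟨i, hi⟩ => hz ⟨i, Finset.mem_univ i, hi⟩, hd⟩

end weyl

/-! ### Monomials and derivations of the truncated polynomial algebra -/

section monomials
variable {F : Type*} [Field F] {p n : ℕ}

lemma xpow_add (a b : Fin n → ℕ) : xpow F p n (a + b) = xpow F p n a * xpow F p n b := by
  unfold xpow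
  rw [← map_mul, MvPolynomial.monomial_mul, one_mul]
  congr 3
  ext i
  simp

lemma xpow_zero : xpow F p n 0 = 1 := by
  unfold xpow
  rw [← map_one (Ideal.Quotient.mk (truncIdeal F p n)), ← map_one MvPolynomial.C,
    MvPolynomial.C_apply]
  congr 3
  ext i
  simp

lemma xpow_single (i : Fin n) (k : ℕ) :
    xpow F p n (Pi.single i k) = xpow F p n (Pi.single i 1) ^ k := by
  induction k with
  | zero => simp [xpow_zero]
  | succ k ih => rw [Pi.single_add, xpow_add, ih, pow_succ]

lemma xpow_single_p (i : Fin n) : xpow F p n (Pi.single i 1) ^ p = 0 := by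
  unfold xpow
  rw [← map_pow, Ideal.Quotient.eq_zero_iff_mem]
  refine Ideal.subset_span ⟨i, ?_⟩
  show MvPolynomial.X i ^ p = _
  congr 1
  rw [MvPolynomial.X]
  congr 1
  ext j
  simp [Finsupp.single_apply, Pi.single_apply, eq_comm]

lemma xpow_eq_zero {a : Fin n → ℕ} {i : Fin n} (h : p ≤ a i) : xpow F p n a = 0 := by
  have e : a = (a - Pi.single i p) + Pi.single i p := by
    ext j
    by_cases hj : j = i
    · subst hj; simp; omega
    · simp [hj]
  rw [e, xpow_add, xpow_single, xpow_single_p, mul_zero]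

lemma linear_ext {N : Type*} [AddCommGroup N] [Module F N] {f g : TruncP F p n →ₗ[F] N}
    (h : ∀ b, (∀ i, b i < p) → f (xpow F p n b) = g (xpow F p n b)) : f = g := by
  have h' : ∀ b, f (xpow F p n b) = g (xpow F p n b) := by
    intro b
    by_cases hb : ∀ i, b i < p
    · exact h b hb
    · push Not at hb
      obtain ⟨i, hi⟩ := hb
      rw [xpow_eq_zero hi, map_zero, map_zero]
  refine LinearMap.ext fun y => ?_
  obtain ⟨q, rfl⟩ := Ideal.Quotient.mk_surjective y
  induction q using MvPolynomial.induction_on' with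
  | add q r hq hr => rw [map_add, map_add, map_add, hq, hr]
  | monomial u c =>
    have : Ideal.Quotient.mk (truncIdeal F p n) (MvPolynomial.monomial u c)
        = c • xpow F p n u := by
      unfold xpow
      rw [← Ideal.Quotient.mkₐ_eq_mk F, ← map_smul, MvPolynomial.smul_monomial, smul_eq_mul, mul_one]
      congr 3
      ext i
      simp
    rw [this, map_smul, map_smul, h']

variable [CharP F p]

lemma Dj_xpow (j : Fin n) (b : Fin n → ℕ) :
    Dj F p n j (xpow F p n b) = (b j : F) • xpow F p n (b - Pi.single j 1) := by
  show DjL F p n j _ = _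
  unfold xpow
  rw [DjL_mk, MvPolynomial.pderiv_monomial, one_mul,
    ← Ideal.Quotient.mkₐ_eq_mk F, ← map_smul, MvPolynomial.smul_monomial, smul_eq_mul, mul_one]
  congr 3
  ext k
  simp [Finsupp.single_apply, Pi.single_apply, eq_comm]

lemma Dj_comm (i j : Fin n) (y : TruncP F p n) :
    Dj F p n i (Dj F p n j y) = Dj F p n j (Dj F p n i y) := by
  have : (Dj F p n i).toLinearMap ∘ₗ (Dj F p n j).toLinearMap
      = (Dj F p n j).toLinearMap ∘ₗ (Dj F p n i).toLinearMap := by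
    refine linear_ext fun b _ => ?_
    simp only [LinearMap.comp_apply, Derivation.coeFn_coe, Dj_xpow, map_smul, smul_smul]
    rcases eq_or_ne i j with rfl | h
    · rfl
    · congr 1
      · simp [h, h.symm, mul_comm]
      · rw [tsub_tsub, tsub_tsub, add_comm]
  exact LinearMap.congr_fun this y

lemma Dj_pow (j : Fin n) : ((Dj F p n j).toLinearMap : Module.End F (TruncP F p n)) ^ p = 0 := by
  have key : ∀ (k : ℕ) (b : Fin n → ℕ),
      (((Dj F p n j).toLinearMap : Module.End F (TruncP F p n)) ^ k) (xpow F p n b)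
        = ((b j).descFactorial k : F) • xpow F p n (b - Pi.single j k) := by
    intro k
    induction k with
    | zero => intro b; simp
    | succ k ih =>
      intro b
      rw [pow_succ', Module.End.mul_apply, ih, map_smul, Derivation.coeFn_coe, Dj_xpow, smul_smul,
        Nat.descFactorial_succ, tsub_tsub, ← Pi.single_add, Pi.sub_apply, Pi.single_eq_same]
      push_cast
      rw [mul_comm]
  refine linear_ext fun b hb => ?_
  rw [key, Nat.descFactorial_eq_zero_iff_lt.2 (hb j)]
  simp

end monomials

/-! ### The star product operators and their `p`-th powers -/

section operators
open Polynomial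

lemma IsWeyl.map {R S ι : Type*} [Ring R] [Ring S] [DecidableEq ι] (φ : R →+* S) {u v : ι → R}
    {a : ι → ℕ} {Z : R} (h : IsWeyl u v a Z) :
    IsWeyl (fun i => φ (u i)) (fun i => φ (v i)) a (φ Z) := by
  induction h with
  | one => rw [map_one]; exact .one
  | step i _ ih => rw [map_add, map_mul, map_mul]; exact ih.step i

/-- The automorphism `s ↦ -s` of `E[s]`. -/
def negVar (E : Type*) [Ring E] : E[X] →+* E[X] :=
  eval₂RingHom' C (-X) fun a => ((commute_X (C a)).neg_left).symm

section flip
variable {E : Type*} [Ring E]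

lemma negVar_C (a : E) : negVar E (C a) = C a := eval₂_C _ _

lemma negVar_X : negVar E X = -X := eval₂_X _ _

lemma coeff_negVar (f : E[X]) (k : ℕ) : (negVar E f).coeff k = (-1) ^ k * f.coeff k := by
  induction f using Polynomial.induction_on' with
  | add f g hf hg => rw [map_add, coeff_add, hf, hg, coeff_add, mul_add]
  | monomial n a =>
    rw [← C_mul_X_pow_eq_monomial, map_mul, map_pow, negVar_C, negVar_X, neg_pow, coeff_C_mul,
      coeff_C_mul]
    have : ((-1 : E[X]) ^ n) = C ((-1) ^ n) := by simp
    rw [this, coeff_C_mul, coeff_X_pow]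
    split_ifs with h
    · subst h
      rw [mul_one, mul_one]
      rcases Nat.even_or_odd k with hk | hk <;> simp [hk.neg_one_pow]
    · simp

/-- The first-order part of a power `(v₀ + s² v₂ + ⋯) ^ k` with noncommuting coefficients. -/
lemma coeff_two_pow {V : E[X]} (h1 : V.coeff 1 = 0) (k : ℕ) :
    (V ^ k).coeff 0 = V.coeff 0 ^ k ∧ (V ^ k).coeff 1 = 0 ∧
      (V ^ k).coeff 2 = ∑ j ∈ Finset.range k, V.coeff 0 ^ j * V.coeff 2 * V.coeff 0 ^ (k - 1 - j) := by
  induction k with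
  | zero => simp [coeff_one]
  | succ k ih =>
    obtain ⟨i0, i1, i2⟩ := ih
    refine ⟨?_, ?_, ?_⟩
    · rw [pow_succ', mul_coeff_zero, i0, pow_succ']
    · rw [pow_succ', coeff_mul]
      simp [Finset.Nat.antidiagonal_succ, i0, i1, h1]
    · rw [pow_succ', coeff_mul, Finset.sum_range_succ']
      simp [Finset.Nat.antidiagonal_succ, i0, i1, i2, h1, Finset.mul_sum]
      refine Finset.sum_congr rfl fun j _ => ?_
      rw [pow_succ', show k - (j + 1) = k - 1 - j by omega]
      simp only [mul_assoc]

/-- Compares the coefficients of `s ^ (p + 2)` in `(Z - Z⁻) ^ p = Z ^ p - (Z⁻) ^ p`, where `Z⁻` is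
`Z` with `s` replaced by `-s`. Only odd coefficients of `Z` contribute to `Z - Z⁻`. -/
lemma hochschild_coeff {F : Type*} [Field F] [Algebra F E] {p : ℕ} [CharP F p] (hp : p.Prime)
    (hp5 : 5 ≤ p) {Z : E[X]} (hc : Commute Z (negVar E Z)) (hZ : X ^ (2 * (p - 1)) ∣ Z ^ p) :
    ∑ j ∈ Finset.range p, Z.coeff 1 ^ j * Z.coeff 3 * Z.coeff 1 ^ (p - 1 - j) = 0 := by
  have h2 : (2 : F) ≠ 0 := two_ne_zero_F hp5
  have hR : (p : E[X]) = 0 := by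
    rw [← map_natCast (algebraMap F E[X]), CharP.cast_eq_zero, map_zero]
  have hodd : Odd p := hp.odd_of_ne_two (by omega)
  have hW : X ^ (2 * (p - 1)) ∣ (Z - negVar E Z) ^ p := by
    rw [sub_eq_add_neg, add_pow_p hp hR hc.neg_right, hodd.neg_pow, ← map_pow]
    refine dvd_add hZ ((dvd_neg).2 ?_)
    obtain ⟨r, hr⟩ := hZ
    refine ⟨negVar E r, ?_⟩
    rw [hr, map_mul, map_pow, negVar_X, (even_two_mul (p - 1)).neg_pow]
  have hcoeff : ∀ k, (Z - negVar E Z).coeff k = Z.coeff k - (-1) ^ k * Z.coeff k := fun k => by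
    rw [coeff_sub, coeff_negVar]
  obtain ⟨V, hV⟩ : ∃ V, V = (Z - negVar E Z).divX := ⟨_, rfl⟩
  have hVW : Z - negVar E Z = X * V := by
    have := X_mul_divX_add (Z - negVar E Z)
    rw [hcoeff 0, ← hV] at this
    rw [← this]; simp
  have hVc : ∀ k, V.coeff k = (Z - negVar E Z).coeff (k + 1) := fun k => by rw [hV, coeff_divX]
  have v0 : V.coeff 0 = (2 : F) • Z.coeff 1 := by rw [hVc, hcoeff]; simp [two_smul]
  have v1 : V.coeff 1 = 0 := by rw [hVc, hcoeff]; simp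
  have v2 : V.coeff 2 = (2 : F) • Z.coeff 3 := by
    rw [hVc, hcoeff]; simp [two_smul, Odd.neg_one_pow (show Odd 3 by decide)]
  have h0 : (V ^ p).coeff 2 = 0 := by
    obtain ⟨r, hr⟩ := hW
    rw [hVW, (commute_X V).mul_pow] at hr
    have := congrArg (fun f => f.coeff (2 + p)) hr
    simp only [coeff_X_pow_mul] at this
    rw [this, coeff_X_pow_mul', if_neg (by omega)]
  rw [(coeff_two_pow v1 p).2.2, v0, v2] at h0
  have : ∀ j ∈ Finset.range p, ((2 : F) • Z.coeff 1) ^ j * ((2 : F) • Z.coeff 3) *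
      ((2 : F) • Z.coeff 1) ^ (p - 1 - j)
        = (2 : F) ^ p • (Z.coeff 1 ^ j * Z.coeff 3 * Z.coeff 1 ^ (p - 1 - j)) := by
    intro j hj
    have := Finset.mem_range.1 hj
    rw [_root_.smul_pow, _root_.smul_pow, smul_mul_smul_comm, smul_mul_smul_comm, ← pow_succ, ← pow_add,
      show j + 1 + (p - 1 - j) = p by omega]
  rw [Finset.sum_congr rfl this, ← Finset.smul_sum] at h0
  exact (smul_eq_zero_iff_right (pow_ne_zero _ h2)).1 h0

end flip

variable (F : Type*) [Field F] (p m : ℕ) [CharP F p]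

/-- Multiplication by `x_i` on `A(2m)`. -/
def mulX (i : Fin (2 * m)) : Module.End F (TruncP F p (2 * m)) :=
  LinearMap.mulLeft F (xpow F p (2 * m) (Pi.single i 1))

/-- The operator `σ(i) D_{i'}`. -/
def dX (i : Fin (2 * m)) : Module.End F (TruncP F p (2 * m)) :=
  sg F m i • (Dj F p (2 * m) (cj m i)).toLinearMap

variable {F p m}

lemma dX_mulX (i j : Fin (2 * m)) : dX F p m i * mulX F p m j
    = mulX F p m j * dX F p m i + if j = cj m i then sg F m i • 1 else 0 := by
  refine LinearMap.ext fun y => ?_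
  have : Dj F p (2 * m) (cj m i) (xpow F p (2 * m) (Pi.single j 1))
      = if j = cj m i then 1 else 0 := by
    rw [Dj_xpow]
    split_ifs with h
    · subst h; simp [xpow_zero]
    · simp [Ne.symm h]
  simp only [dX, mulX, Module.End.mul_apply, LinearMap.smul_apply, LinearMap.mulLeft_apply,
    Derivation.coeFn_coe, Derivation.leibniz, this, smul_eq_mul, LinearMap.add_apply]
  split_ifs <;> simp [smul_add, mul_smul_comm]

lemma heisRel : HeisRel F (fun i => C (mulX F p m i)) (fun i => C (dX F p m i) * X)
    (X : (Module.End F (TruncP F p (2 * m)))[X]) where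
  central z := commute_X z
  uu i j := by
    show C _ * C _ = C _ * C _
    rw [← C_mul, ← C_mul]
    congr 1
    refine LinearMap.ext fun y => ?_
    simp only [mulX, Module.End.mul_apply, LinearMap.mulLeft_apply]
    ring
  vv i j := by
    have : Commute (C (dX F p m i)) (C (dX F p m j)) := by
      show C _ * C _ = C _ * C _
      rw [← C_mul, ← C_mul]
      congr 1
      refine LinearMap.ext fun y => ?_
      simp only [dX, Module.End.mul_apply, LinearMap.smul_apply, Derivation.coeFn_coe, map_smul]
      rw [Dj_comm, smul_comm]
    exact (this.mul_right (commute_X _).symm).mul_left (commute_X _)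
  vu i j := by
    rw [mul_assoc, (commute_X _).eq, ← mul_assoc, ← C_mul, dX_mulX, C_add, add_mul, C_mul, mul_assoc]
    split_ifs
    · rw [← smul_C, C_1, smul_mul_assoc, one_mul]
    · simp

lemma heis_pow (hp : p.Prime) (i : Fin (2 * m)) :
    (C (mulX F p m i) + C (dX F p m i) * X : (Module.End F (TruncP F p (2 * m)))[X]) ^ p = 0 := by
  have hR : (p : (Module.End F (TruncP F p (2 * m)))[X]) = 0 := by
    rw [← map_natCast (algebraMap F _), CharP.cast_eq_zero, map_zero]
  have hne : i ≠ cj m i := by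
    intro h
    have := congrArg Fin.val h
    have := i.isLt
    unfold cj at *
    split_ifs at * <;> simp at * <;> omega
  have hc := (heisRel (F := F) (p := p) (m := m)).vu i i
  rw [if_neg hne, add_zero] at hc
  rw [add_pow_p hp hR (Eq.symm hc), (commute_X _).symm.mul_pow, ← C_pow, ← C_pow]
  have h1 : mulX F p m i ^ p = 0 := by
    rw [mulX, LinearMap.pow_mulLeft, xpow_single_p, LinearMap.mulLeft_zero_eq_zero]
  have h2 : dX F p m i ^ p = 0 := by
    rw [dX, _root_.smul_pow, Dj_pow, smul_zero]
  rw [h1, h2]; simp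

/-- If `a i = a i'` for all `i` then `|a|` is even, so `|a| ≥ 3` makes `∑ min (a i) (a i')` at
least `2`; this is the exponent required by `hochschild_coeff`. -/
lemma hochschild_weyl (hp : p.Prime) (hp5 : 5 ≤ p) (a : Fin (2 * m) → ℕ) (ha : 3 ≤ ∑ i, a i) :
    ∃ Z : (Module.End F (TruncP F p (2 * m)))[X],
      IsWeyl (fun i => C (mulX F p m i)) (fun i => C (dX F p m i) * X) a Z ∧
      ∑ j ∈ Finset.range p, Z.coeff 1 ^ j * Z.coeff 3 * Z.coeff 1 ^ (p - 1 - j) = 0 := by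
  obtain ⟨Z, hZ, hne, hd⟩ := exists_isWeyl hp hp5 heisRel (heis_pow (F := F) (m := m) hp) a
  refine ⟨Z, hZ, hochschild_coeff (F := F) hp hp5 ?_ ?_⟩
  · refine hZ.commute_flip (two_ne_zero_F hp5) heisRel ?_ (b := a)
    have := hZ.map (negVar _)
    simpa only [map_mul, negVar_C, negVar_X, mul_neg] using this
  · by_cases h : ∃ i : Fin m, a (lo i) ≠ a (cj m (lo i))
    · rw [hne h]; exact dvd_zero _
    · push Not at h
      rw [sum_pairs] at ha
      have h2 : 2 ≤ ∑ i : Fin m, min (a (lo i)) (a (cj m (lo i))) := by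
        simp only [← h, min_self] at ha ⊢
        rw [Finset.sum_add_distrib] at ha
        omega
      obtain ⟨r, hr⟩ := hd
      obtain ⟨k, hk⟩ := Nat.exists_eq_add_of_le h2
      rw [hk, mul_add, pow_add, _root_.smul_pow, mul_comm (p - 1) 2] at hr
      rw [hr, smul_mul_assoc, smul_mul_assoc, mul_assoc, ← mul_smul_comm]
      exact dvd_mul_right _ _

end operators

/-! ### Coefficients of the star product -/

section coefficients
open Polynomial
variable {F : Type*} [Field F] {p m : ℕ} [CharP F p]

omit [CharP F p] in
lemma xpow_sum {n : ℕ} {κ : Type*} (s : Finset κ) (f : κ → Fin n → ℕ) :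
    xpow F p n (∑ k ∈ s, f k) = ∏ k ∈ s, xpow F p n (f k) := by
  classical
  induction s using Finset.induction_on with
  | empty => simp [xpow_zero]
  | insert k s hk ih => rw [Finset.sum_insert hk, Finset.prod_insert hk, xpow_add, ih]

omit [CharP F p] in
lemma xpow_eq_prod {n : ℕ} (b : Fin n → ℕ) :
    xpow F p n b = ∏ i, xpow F p n (Pi.single i (b i)) := by
  rw [← xpow_sum, Finset.univ_sum_single]

lemma prod_cj {M : Type*} [CommMonoid M] (f : Fin (2 * m) → M) :
    ∏ i, f (cj m i) = ∏ i, f i :=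
  Equiv.prod_comp (Function.Involutive.toPerm (cj m) cj_cj) f

lemma step_coeff {E : Type*} [Ring E] (x d : E) (Z : E[X]) (k : ℕ) :
    (C x * Z + Z * (C d * X)).coeff (k + 1) = x * Z.coeff (k + 1) + Z.coeff k * d := by
  rw [coeff_add, coeff_C_mul, ← mul_assoc, coeff_mul_X, coeff_mul_C]

lemma step_coeff_zero {E : Type*} [Ring E] (x d : E) (Z : E[X]) :
    (C x * Z + Z * (C d * X)).coeff 0 = x * Z.coeff 0 := by
  rw [coeff_add, coeff_C_mul, ← mul_assoc, coeff_mul_X_zero, add_zero]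

variable {a : Fin (2 * m) → ℕ} {Z : (Module.End F (TruncP F p (2 * m)))[X]}

lemma weyl_coeff_zero
    (hZ : IsWeyl (fun i => C (mulX F p m i)) (fun i => C (dX F p m i) * X) a Z)
    (y : TruncP F p (2 * m)) : Z.coeff 0 y = xpow F p (2 * m) a * y := by
  induction hZ with
  | one => simp [xpow_zero]
  | step i _ ih =>
    rw [step_coeff_zero, Module.End.mul_apply, ih, mulX, LinearMap.mulLeft_apply, xpow_add]
    ring

lemma weyl_coeff_one
    (hZ : IsWeyl (fun i => C (mulX F p m i)) (fun i => C (dX F p m i) * X) a Z)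
    (y : TruncP F p (2 * m)) : Z.coeff 1 y = DHH F p m (xpow F p (2 * m) a) y := by
  induction hZ with
  | one => simp [DHH, xpow_zero, coeff_one]
  | @step a Z i hZ ih =>
    rw [step_coeff, LinearMap.add_apply, Module.End.mul_apply, Module.End.mul_apply, ih,
      weyl_coeff_zero hZ, mulX, LinearMap.mulLeft_apply, xpow_add, dX]
    have hD : ∀ j, Dj F p (2 * m) j (xpow F p (2 * m) (Pi.single i 1)) = if j = i then 1 else 0 := by
      intro j
      rw [Dj_xpow]
      split_ifs with h
      · subst h; simp [xpow_zero]
      · simp [h]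
    simp only [DHH, Derivation.leibniz, smul_eq_mul, hD, add_mul, smul_add, Finset.sum_add_distrib,
      mul_ite, mul_one, mul_zero, ite_mul, zero_mul, smul_ite, smul_zero, Finset.sum_ite_eq',
      Finset.mem_univ, if_true, LinearMap.smul_apply, Derivation.coeFn_coe, mul_smul_comm,
      Finset.mul_sum]
    rw [add_comm]
    congr 1
    exact Finset.sum_congr rfl fun j _ => by rw [mul_assoc]

variable (F p m) in
/-- The contribution of the pair `(i, i')` to the star product of `x_i^a` and `x_{i'}^b`,
as a power series in `s` with coefficients in `A(2m)`. -/
def pairSeries (i : Fin (2 * m)) (a b : ℕ) : PowerSeries (TruncP F p (2 * m)) :=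
  PowerSeries.mk fun d => (((a.choose d * b.choose d * d.factorial : ℕ) : F) * sg F m i ^ d) •
    (xpow F p (2 * m) (Pi.single i (a - d)) * xpow F p (2 * m) (Pi.single (cj m i) (b - d)))

omit [CharP F p] in
/-- The Weyl step for one pair; on coefficients it is Pascal's rule for `a` together with
`b * choose (b - 1) d = (d + 1) * choose b (d + 1)`. -/
lemma pairSeries_succ (i : Fin (2 * m)) (a b : ℕ) :
    pairSeries F p m i (a + 1) b
      = PowerSeries.C (xpow F p (2 * m) (Pi.single i 1)) * pairSeries F p m i a b
        + PowerSeries.X * (((b : F) * sg F m i) • pairSeries F p m i a (b - 1)) := by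
  ext d
  cases d with
  | zero =>
    simp [pairSeries, Pi.single_add, xpow_add]
    ring
  | succ d =>
    rw [map_add, PowerSeries.coeff_C_mul, PowerSeries.coeff_succ_X_mul, PowerSeries.coeff_smul]
    simp only [pairSeries, PowerSeries.coeff_mk]
    have hb : b * (b - 1).choose d = b.choose (d + 1) * (d + 1) := by
      cases b with
      | zero => simp
      | succ b => simpa using Nat.add_one_mul_choose_eq b d
    have hx : ((a.choose (d + 1) : ℕ) : F) • (xpow F p (2 * m) (Pi.single i 1)
        * xpow F p (2 * m) (Pi.single i (a - (d + 1))))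
        = ((a.choose (d + 1) : ℕ) : F) • xpow F p (2 * m) (Pi.single i (a - d)) := by
      by_cases h : d + 1 ≤ a
      · rw [← xpow_add, ← Pi.single_add, show 1 + (a - (d + 1)) = a - d by omega]
      · rw [Nat.choose_eq_zero_of_lt (by omega)]; simp
    have hx' := congrArg (fun z => (((b.choose (d + 1) * (d + 1).factorial : ℕ) : F)
      * sg F m i ^ (d + 1)) • (z * xpow F p (2 * m) (Pi.single (cj m i) (b - (d + 1))))) hx
    simp only [smul_mul_assoc, smul_smul] at hx'
    rw [show a + 1 - (d + 1) = a - d by omega, show b - 1 - d = b - (d + 1) by omega, smul_smul,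
      mul_smul_comm, ← mul_assoc (xpow F p (2 * m) (Pi.single i 1))]
    rw [show ((((a.choose (d + 1) * b.choose (d + 1) * (d + 1).factorial : ℕ) : F)
        * sg F m i ^ (d + 1))) = ((b.choose (d + 1) * (d + 1).factorial : ℕ) : F)
      * sg F m i ^ (d + 1) * ((a.choose (d + 1) : ℕ) : F) by push_cast; ring, hx', ← add_smul]
    congr 1
    have hb' := congrArg (fun k : ℕ => (k : F)) hb
    push_cast at hb' ⊢
    rw [Nat.choose_succ_succ, Nat.factorial_succ]
    push_cast
    linear_combination (-(sg F m i ^ (d + 1) * (a.choose d : F) * (d.factorial : F))) * hb'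

omit [CharP F p] in
lemma pairSeries_zero (i : Fin (2 * m)) (b : ℕ) :
    pairSeries F p m i 0 b = PowerSeries.C (xpow F p (2 * m) (Pi.single (cj m i) b)) := by
  ext d
  cases d with
  | zero => simp [pairSeries, xpow_zero]
  | succ d => simp [pairSeries]

/-- The star product `x^a * x^b` is a product over the index pairs `(i, i')`. -/
lemma weyl_coeff
    (hZ : IsWeyl (fun i => C (mulX F p m i)) (fun i => C (dX F p m i) * X) a Z) :
    ∀ (b : Fin (2 * m) → ℕ) (k : ℕ), Z.coeff k (xpow F p (2 * m) b)
      = PowerSeries.coeff k (∏ i, pairSeries F p m i (a i) (b (cj m i))) := by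
  induction hZ with
  | one =>
    intro b k
    simp only [Pi.zero_apply, pairSeries_zero]
    rw [← map_prod, prod_cj fun i => xpow F p (2 * m) (Pi.single i (b i)), ← xpow_eq_prod,
      PowerSeries.coeff_C, coeff_one]
    split_ifs <;> simp
  | @step a Z i hZ ih =>
    intro b k
    have hprod : ∏ j, pairSeries F p m j ((a + Pi.single i 1 : Fin (2 * m) → ℕ) j) (b (cj m j))
        = PowerSeries.C (xpow F p (2 * m) (Pi.single i 1))
            * ∏ j, pairSeries F p m j (a j) (b (cj m j))
          + PowerSeries.X * (((b (cj m i) : F) * sg F m i)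
            • ∏ j, pairSeries F p m j (a j) ((b - Pi.single (cj m i) 1 : Fin (2 * m) → ℕ) (cj m j))) := by
      have h1 : ∏ j ∈ Finset.univ.erase i, pairSeries F p m j ((a + Pi.single i 1 : Fin (2 * m) → ℕ) j) (b (cj m j))
          = ∏ j ∈ Finset.univ.erase i, pairSeries F p m j (a j) (b (cj m j)) :=
        Finset.prod_congr rfl fun j hj => by simp [Finset.ne_of_mem_erase hj]
      have h2 : ∏ j ∈ Finset.univ.erase i,
            pairSeries F p m j (a j) ((b - Pi.single (cj m i) 1 : Fin (2 * m) → ℕ) (cj m j))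
          = ∏ j ∈ Finset.univ.erase i, pairSeries F p m j (a j) (b (cj m j)) :=
        Finset.prod_congr rfl fun j hj => by
          have : cj m j ≠ cj m i := fun h => Finset.ne_of_mem_erase hj (cj_inj.1 h)
          simp [this]
      have hm : ∀ c d : Fin (2 * m) → ℕ, ∏ j, pairSeries F p m j (c j) (d (cj m j))
          = pairSeries F p m i (c i) (d (cj m i))
            * ∏ j ∈ Finset.univ.erase i, pairSeries F p m j (c j) (d (cj m j)) := fun c d =>
        (Finset.mul_prod_erase _ _ (Finset.mem_univ i)).symm
      rw [hm (a + Pi.single i 1) b, hm a b, hm a (b - Pi.single (cj m i) 1), h1, h2]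
      simp only [Pi.add_apply, Pi.sub_apply, Pi.single_eq_same]
      rw [pairSeries_succ, add_mul, mul_assoc, mul_assoc, smul_mul_assoc]
    rw [hprod, map_add, PowerSeries.coeff_C_mul]
    cases k with
    | zero =>
      rw [step_coeff_zero, Module.End.mul_apply, ih, PowerSeries.coeff_zero_X_mul, add_zero]
      rfl
    | succ k =>
      rw [step_coeff, LinearMap.add_apply, Module.End.mul_apply, Module.End.mul_apply, ih b (k + 1),
        PowerSeries.coeff_succ_X_mul, PowerSeries.coeff_smul, ← ih (b - Pi.single (cj m i) 1) k, dX, LinearMap.smul_apply,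
        Derivation.coeFn_coe, Dj_xpow, smul_smul, map_smul, mul_comm (sg F m i)]
      rfl

/-- Expanding `weyl_coeff` at `s³` gives the sum defining `Φ`. The multi-indices of total degree `3`
are matched with functions to `Fin 4`; the terms excluded in the definition of `Φ` have a vanishing
binomial coefficient. -/
lemma weyl_coeff_three {Φ : TruncP F p (2 * m) → TruncP F p (2 * m) → TruncP F p (2 * m)}
    (hΦ : IsPhiH F p m Φ) (ha : ∀ i, a i < p)
    (hZ : IsWeyl (fun i => C (mulX F p m i)) (fun i => C (dX F p m i) * X) a Z) :
    Z.coeff 3 = (hΦ.1.1 (xpow F p (2 * m) a)).mk' _ := by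
  refine linear_ext fun b hb => ?_
  rw [IsLinearMap.mk'_apply, hΦ.2.2 a b ha hb, weyl_coeff hZ, PowerSeries.coeff_prod,
    ← Finset.sum_filter_add_sum_filter_not (s := Finset.univ) (fun d : Fin (2 * m) → Fin 4 => (∑ i, (d i : ℕ)) = 3)]
  rw [Finset.sum_eq_zero (s := Finset.filter (fun d : Fin (2 * m) → Fin 4 =>
    ¬ (∑ i, (d i : ℕ)) = 3) Finset.univ) (fun d hd => if_neg fun h =>
      (Finset.mem_filter.1 hd).2 h.1), add_zero]
  have hle : ∀ l ∈ Finset.finsuppAntidiag (Finset.univ : Finset (Fin (2 * m))) 3, ∀ i, l i ≤ 3 := by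
    intro l hl i
    rw [Finset.mem_finsuppAntidiag] at hl
    rw [← hl.1]
    exact Finset.single_le_sum (f := fun i => l i) (fun _ _ => Nat.zero_le _) (Finset.mem_univ i)
  refine Finset.sum_bij' (fun l _ i => Fin.ofNat 4 (l i))
    (fun d _ => Finsupp.equivFunOnFinite.symm fun i => (d i : ℕ)) ?_ ?_ ?_ ?_ ?_
  · intro l hl
    have hl' := (Finset.mem_finsuppAntidiag.1 hl).1
    refine Finset.mem_filter.2 ⟨Finset.mem_univ _, ?_⟩
    refine Eq.trans (Finset.sum_congr rfl fun i _ => ?_) hl'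
    exact Nat.mod_eq_of_lt (Nat.lt_succ_of_le (hle l hl i))
  · intro d hd
    rw [Finset.mem_finsuppAntidiag]
    exact ⟨(Finset.mem_filter.1 hd).2, Finset.subset_univ _⟩
  · intro l hl
    ext i
    exact Nat.mod_eq_of_lt (Nat.lt_succ_of_le (hle l hl i))
  · intro d hd
    ext i
    exact Nat.mod_eq_of_lt (d i).isLt
  · intro l hl
    have hval : ∀ i, ((Fin.ofNat 4 (l i) : Fin 4) : ℕ) = l i := fun i =>
      Nat.mod_eq_of_lt (Nat.lt_succ_of_le (hle l hl i))
    have hl' := (Finset.mem_finsuppAntidiag.1 hl).1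
    simp only [hval]
    simp only [pairSeries, PowerSeries.coeff_mk]
    rw [Finset.prod_smul, Finset.prod_mul_distrib]
    split_ifs with h
    · congr 1
      · rw [← prod_cj fun i => ((((b i).choose (l (cj m i)) : ℕ)) : F),
          ← Finset.prod_mul_distrib, ← Finset.prod_mul_distrib, ← Finset.prod_mul_distrib,
          ← Finset.prod_mul_distrib]
        refine Finset.prod_congr rfl fun i _ => ?_
        rw [cj_cj]
        push_cast
        ring
      · rw [Finset.prod_mul_distrib,
          ← prod_cj fun i => xpow F p (2 * m) (Pi.single (cj m i) (b (cj m i) - l i))]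
        simp only [cj_cj]
        rw [← xpow_eq_prod, ← xpow_eq_prod fun i => b i - l (cj m i), ← xpow_add]
        congr 1
        ext i
        have h1 := h.2.1 i
        have h2 := h.2.2 i
        simp only [Pi.add_apply, Pi.sub_apply]
        omega
    · rw [not_and_or, not_and_or] at h
      have h0 : ∃ i, (((a i).choose (l i) * (b (cj m i)).choose (l i) * (l i).factorial : ℕ) : F)
          = 0 := by
        rcases h with h | h | h
        · exact absurd hl' h
        · push Not at h
          obtain ⟨i, hi⟩ := h
          exact ⟨i, by rw [Nat.choose_eq_zero_of_lt hi]; simp⟩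
        · push Not at h
          obtain ⟨i, hi⟩ := h
          exact ⟨cj m i, by rw [cj_cj, Nat.choose_eq_zero_of_lt hi]; simp⟩
      obtain ⟨i, hi⟩ := h0
      rw [Finset.prod_eq_zero (Finset.mem_univ i) hi, zero_mul, zero_smul]

/-- The Hochschild sum vanishes already for the Poisson bracket, before constant terms are removed. -/
theorem hochschild_DHH (hp : p.Prime) (hp5 : 5 ≤ p)
    {Φ : TruncP F p (2 * m) → TruncP F p (2 * m) → TruncP F p (2 * m)}
    (hΦ : IsPhiH F p m Φ) (ha : ∀ i, a i < p) (ha3 : 3 ≤ ∑ i, a i) (y : TruncP F p (2 * m)) :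
    ∑ j ∈ Finset.range p, (DHH F p m (xpow F p (2 * m) a))^[j]
      (Φ (xpow F p (2 * m) a) ((DHH F p m (xpow F p (2 * m) a))^[p - 1 - j] y)) = 0 := by
  obtain ⟨Z, hZ, h⟩ := hochschild_weyl (F := F) hp hp5 a ha3
  have h1 : (⇑(Z.coeff 1) : TruncP F p (2 * m) → _) = DHH F p m (xpow F p (2 * m) a) :=
    funext fun y => weyl_coeff_one hZ y
  have h' := LinearMap.congr_fun h y
  rw [LinearMap.sum_apply, LinearMap.zero_apply] at h'
  rw [← h', ← h1]
  refine Finset.sum_congr rfl fun j _ => ?_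
  rw [Module.End.mul_apply, Module.End.mul_apply, Module.End.pow_apply, Module.End.pow_apply,
    weyl_coeff_three hΦ ha hZ]
  rfl

end coefficients

/-! ### Constant terms and the Hochschild operator -/

section constants
variable {F : Type*} [Field F] {p m : ℕ} [CharP F p]

lemma DHH_linear (f : TruncP F p (2 * m)) : IsLinearMap F (DHH F p m f) where
  map_add x y := by simp [DHH, mul_add, Finset.sum_add_distrib]
  map_smul c x := by
    simp only [DHH, Derivation.map_smul, mul_smul_comm, Finset.smul_sum]
    exact Finset.sum_congr rfl fun _ _ => smul_comm _ _ _

lemma DHH_one (f : TruncP F p (2 * m)) : DHH F p m f 1 = 0 := by simp [DHH]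

variable (F p m) in
/-- Removal of the constant term. -/
def dropConst (y : TruncP F p (2 * m)) : TruncP F p (2 * m) :=
  y - coeffT F p (2 * m) (fun _ => 0) y • 1

omit [CharP F p] in
lemma dropConst_sum {κ : Type*} (s : Finset κ) (f : κ → TruncP F p (2 * m)) :
    dropConst F p m (∑ k ∈ s, f k) = ∑ k ∈ s, dropConst F p m (f k) := by
  simp [dropConst, Finset.sum_smul]

omit [CharP F p] in
lemma apply_dropConst {N : Type*} [AddCommGroup N] [Module F N]
    {f : TruncP F p (2 * m) → N} (hf : IsLinearMap F f) (h1 : f 1 = 0) (y : TruncP F p (2 * m)) :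
    f (dropConst F p m y) = f y := by
  rw [dropConst, hf.map_sub, hf.map_smul, h1, smul_zero, sub_zero]

/-- Constants are killed by the Poisson bracket, so in an iterated bracket only the last removal of
the constant term is visible. -/
lemma Hbr_iterate_succ (f y : TruncP F p (2 * m)) (k : ℕ) :
    (fun z => Hbr F p m f z)^[k + 1] y = dropConst F p m ((DHH F p m f)^[k + 1] y) := by
  induction k with
  | zero => rfl
  | succ k ih =>
    rw [Function.iterate_succ_apply', ih, Function.iterate_succ_apply' _ (k + 1)]
    show dropConst F p m (DHH F p m f _) = _
    rw [apply_dropConst (DHH_linear f) (DHH_one f)]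

variable {Φ : TruncP F p (2 * m) → TruncP F p (2 * m) → TruncP F p (2 * m)}

omit [CharP F p] in
lemma phi_one (hp : p.Prime) (hΦ : IsPhiH F p m Φ) {a : Fin (2 * m) → ℕ} (ha : ∀ i, a i < p) :
    Φ (xpow F p (2 * m) a) 1 = 0 := by
  rw [← xpow_zero, hΦ.2.2 a 0 ha fun _ => hp.pos]
  refine Finset.sum_eq_zero fun d _ => if_neg ?_
  rintro ⟨h3, -, h0⟩
  have : ∑ i, (d i : ℕ) = 0 := Finset.sum_eq_zero fun i _ => by
    have := h0 (cj m i)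
    rw [cj_cj] at this
    simpa using this
  omega

omit [CharP F p] in
lemma phi_eq_zero (hΦ : IsPhiH F p m Φ) {a : Fin (2 * m) → ℕ} (ha : ∀ i, a i < p)
    (ha2 : ∑ i, a i < 3) (y : TruncP F p (2 * m)) : Φ (xpow F p (2 * m) a) y = 0 := by
  have : (hΦ.1.1 (xpow F p (2 * m) a)).mk' _ = 0 := by
    refine linear_ext fun b hb => ?_
    rw [IsLinearMap.mk'_apply, hΦ.2.2 a b ha hb, LinearMap.zero_apply]
    refine Finset.sum_eq_zero fun d _ => if_neg ?_
    rintro ⟨h3, h, -⟩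
    have := Finset.sum_le_sum fun i (_ : i ∈ Finset.univ) => h i
    omega
  exact LinearMap.congr_fun this y

lemma sum_single_pair (i : Fin (2 * m)) :
    ∑ k, (Pi.single i 1 + Pi.single (cj m i) 1 : Fin (2 * m) → ℕ) k = 2 := by
  simp only [Pi.add_apply, Finset.sum_add_distrib]
  simp

omit [CharP F p] in
lemma phi_HpPow (hΦ : IsPhiH F p m Φ) {a : Fin (2 * m) → ℕ} (ha : ∀ i, a i < p)
    (y : TruncP F p (2 * m)) : Φ (HpPow F p m a) y = 0 := by
  unfold HpPow
  split_ifs with h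
  · obtain ⟨i, -, rfl⟩ := h
    exact phi_eq_zero hΦ ha (by rw [sum_single_pair]; norm_num) y
  · exact (hΦ.1.2 y).map_zero

variable (F p m) in
/-- The span of the monomials of degree at least `k`. -/
def degFilt (k : ℕ) : Submodule F (TruncP F p (2 * m)) :=
  Submodule.span F {y | ∃ b : Fin (2 * m) → ℕ, k ≤ ∑ i, b i ∧ y = xpow F p (2 * m) b}

omit [CharP F p] in
lemma mem_degFilt {k : ℕ} {b : Fin (2 * m) → ℕ} (h : k ≤ ∑ i, b i) :
    xpow F p (2 * m) b ∈ degFilt F p m k := Submodule.subset_span ⟨b, h, rfl⟩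

omit [CharP F p] in
lemma mem_degFilt_zero (y : TruncP F p (2 * m)) : y ∈ degFilt F p m 0 := by
  have : (degFilt F p m 0).mkQ = 0 := linear_ext fun b _ => by
    rw [LinearMap.zero_apply, Submodule.mkQ_apply, Submodule.Quotient.mk_eq_zero]
    exact mem_degFilt (Nat.zero_le _)
  have h := LinearMap.congr_fun this y
  rwa [LinearMap.zero_apply, Submodule.mkQ_apply, Submodule.Quotient.mk_eq_zero] at h

/-- The Poisson bracket with a monomial of degree `r` has degree `r - 2 ≥ 1`. -/
lemma DHH_mem_degFilt {a : Fin (2 * m) → ℕ} (ha3 : 3 ≤ ∑ i, a i) {k : ℕ}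
    {y : TruncP F p (2 * m)} (hy : y ∈ degFilt F p m k) :
    DHH F p m (xpow F p (2 * m) a) y ∈ degFilt F p m (k + 1) := by
  suffices h : degFilt F p m k ≤
      (degFilt F p m (k + 1)).comap ((DHH_linear (xpow F p (2 * m) a)).mk' _) from h hy
  refine Submodule.span_le.2 ?_
  rintro _ ⟨b, hb, rfl⟩
  show DHH F p m (xpow F p (2 * m) a) (xpow F p (2 * m) b) ∈ degFilt F p m (k + 1)
  refine Submodule.sum_mem _ fun j _ => Submodule.smul_mem _ _ ?_
  rw [Dj_xpow, Dj_xpow, smul_mul_smul_comm, ← xpow_add]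
  by_cases h : a j = 0 ∨ b (cj m j) = 0
  · rcases h with h | h <;> simp [h]
  refine Submodule.smul_mem _ _ (mem_degFilt ?_)
  push Not at h
  have hs : ∀ (c : Fin (2 * m) → ℕ) (i : Fin (2 * m)), c i ≠ 0 →
      ∑ k, (c - Pi.single i 1 : Fin (2 * m) → ℕ) k + 1 = ∑ k, c k := by
    intro c i hc
    have : c = (c - Pi.single i 1) + Pi.single i 1 := by
      ext k
      by_cases hk : k = i
      · subst hk; simp; omega
      · simp [hk]
    conv_rhs => rw [this]
    simp only [Pi.add_apply, Finset.sum_add_distrib]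
    simp
  have h1 := hs a j h.1
  have h2 := hs b (cj m j) h.2
  simp only [Pi.add_apply, Finset.sum_add_distrib]
  omega

omit [CharP F p] in
lemma coeffT_zero_xpow {e : Fin (2 * m) → ℕ} (he : e ≠ 0) :
    coeffT F p (2 * m) (fun _ => 0) (xpow F p (2 * m) e) = 0 := by
  unfold coeffT
  split_ifs with h
  · unfold xpow
    rw [liftF_mk]
    simp only [LinearMap.coe_mk, AddHom.coe_mk]
    rw [MvPolynomial.coeff_monomial, if_neg]
    exact fun h => he (Finsupp.equivFunOnFinite.symm.injective h)
  · rfl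

omit [CharP F p] in
/-- `Φ` lowers the total degree of a pair of monomials by `6`, so here its value has degree at
least `1`. -/
lemma coeffT_phi (hΦ : IsPhiH F p m Φ) {a : Fin (2 * m) → ℕ} (ha : ∀ i, a i < p)
    (ha3 : 3 ≤ ∑ i, a i) {y : TruncP F p (2 * m)} (hy : y ∈ degFilt F p m 4) :
    coeffT F p (2 * m) (fun _ => 0) (Φ (xpow F p (2 * m) a) y) = 0 := by
  suffices h : degFilt F p m 4 ≤ LinearMap.ker (coeffT F p (2 * m) (fun _ => 0) ∘ₗ
      (hΦ.1.1 (xpow F p (2 * m) a)).mk' _) from h hy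
  refine Submodule.span_le.2 ?_
  rintro _ ⟨b, hb, rfl⟩
  by_cases hbox : ∀ i, b i < p
  · show coeffT F p (2 * m) (fun _ => 0) (Φ _ _) = 0
    rw [hΦ.2.2 a b ha hbox, map_sum]
    refine Finset.sum_eq_zero fun d _ => ?_
    split_ifs with h
    · rw [map_smul, coeffT_zero_xpow, smul_zero]
      intro h0
      have hle : ∀ i, a i + b i ≤ (d i : ℕ) + (d (cj m i) : ℕ) := by
        intro i
        have := congrFun h0 i
        simp only [Pi.sub_apply, Pi.add_apply, Pi.zero_apply] at this
        omega
      have hsum := Finset.sum_le_sum fun i (_ : i ∈ Finset.univ) => hle i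
      rw [Finset.sum_add_distrib, Finset.sum_add_distrib,
        show ∑ i, (d (cj m i) : ℕ) = ∑ i, (d i : ℕ) from
          Equiv.sum_comp (Function.Involutive.toPerm (cj m) cj_cj) fun i => (d i : ℕ), h.1] at hsum
      omega
    · exact map_zero _
  · push Not at hbox
    obtain ⟨i, hi⟩ := hbox
    rw [xpow_eq_zero hi]
    exact zero_mem _

/-- The Hochschild operator of `Φ` vanishes on every monomial. -/
lemma HOp_eq_zero (hp : p.Prime) (hp5 : 5 ≤ p) (hΦ : IsPhiH F p m Φ) {a : Fin (2 * m) → ℕ}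
    (ha : ∀ i, a i < p) (y : TruncP F p (2 * m)) :
    HOp p (Hbr F p m) Φ (xpow F p (2 * m) a) (HpPow F p m a) y = 0 := by
  obtain ⟨x, hx⟩ : ∃ x, x = xpow F p (2 * m) a := ⟨_, rfl⟩
  rw [HOp, phi_HpPow hΦ ha, sub_zero, ← hx]
  rcases lt_or_ge (∑ i, a i) 3 with ha3 | ha3
  · refine Finset.sum_eq_zero fun j _ => ?_
    rw [hx, phi_eq_zero hΦ ha ha3]
    refine Function.iterate_fixed ?_ j
    show Hbr F p m _ 0 = 0
    simp [Hbr, (DHH_linear _).map_zero]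
  have hone : Φ x 1 = 0 := hx ▸ phi_one hp hΦ ha
  have hin : ∀ k, Φ x ((fun z => Hbr F p m x z)^[k] y) = Φ x ((DHH F p m x)^[k] y) := by
    intro k
    cases k with
    | zero => rfl
    | succ k => rw [Hbr_iterate_succ, apply_dropConst (hΦ.1.1 x) hone]
  have hmem : ∀ k, (DHH F p m x)^[k] y ∈ degFilt F p m k := by
    intro k
    induction k with
    | zero => exact mem_degFilt_zero y
    | succ k ih =>
      rw [Function.iterate_succ_apply', hx]
      rw [hx] at ih
      exact DHH_mem_degFilt ha3 ih
  have hle : degFilt F p m (p - 1) ≤ degFilt F p m 4 :=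
    Submodule.span_mono fun _ ⟨b, hb, h⟩ => ⟨b, by omega, h⟩
  have hout : ∀ j, (fun z => Hbr F p m x z)^[j] (Φ x ((DHH F p m x)^[p - 1 - j] y))
      = dropConst F p m ((DHH F p m x)^[j] (Φ x ((DHH F p m x)^[p - 1 - j] y))) := by
    intro j
    cases j with
    | zero =>
      have := coeffT_phi hΦ ha ha3 (hle (hmem (p - 1)))
      rw [← hx] at this
      rw [Function.iterate_zero_apply, Function.iterate_zero_apply, dropConst, Nat.sub_zero, this,
        zero_smul, sub_zero]
    | succ j => exact Hbr_iterate_succ _ _ _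
  simp only [hin, hout]
  rw [← dropConst_sum, hx, hochschild_DHH hp hp5 hΦ ha ha3]
  simp [dropConst]

end constants

/-- For every monomial `x^a ∈ H(n)`, the map `H_Φ(x^a)` is an inner derivation of the
Hamiltonian algebra `H(n)` (with `(x^a)^{[p]} = x^a` if `x^a = x_i x_{i'}` for some
`i ≤ m`, `0` otherwise). -/
theorem hamiltonian_phi_HOp_inner
    (p m : ℕ) (hp : p.Prime) (hp5 : 5 ≤ p) (hm : 1 ≤ m)
    (F : Type*) [Field F] [IsAlgClosed F] [CharP F p]
    (Φ : TruncP F p (2 * m) → TruncP F p (2 * m) → TruncP F p (2 * m))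
    (hΦ : IsPhiH F p m Φ) :
    ∀ a : Fin (2 * m) → ℕ,
      (∀ i, a i < p) → a ≠ (fun _ => 0) → a ≠ (fun _ => p - 1) →
      IsInnerOn F (Hsub F p m) (Hbr F p m)
        (HOp p (Hbr F p m) Φ (xpow F p (2 * m) a) (HpPow F p m a)) := by
  intro a ha _ _
  refine ⟨0, zero_mem _, fun y _ => ?_⟩
  rw [HOp_eq_zero hp hp5 hΦ ha]
  simp [Hbr, DHH]
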